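/- Let M be an open surface with infinitely generated fundamental group and let {W_n} be a compact exhaustion of M such that each W_n is connected, each boundary curve of W_n separates M, and M − int(W_n) has no compact components. Then for each n there exists m > n such that W_m − int(W_n) has a connected component that is not an annulus. -/

import Mathlib

open Metric

/-- The standard closed annulus in ℝ² (model for `S¹ × [0,1]`). -/
noncomputable def annulusModel : Set (ℝ × ℝ) := closedBall (0 : ℝ × ℝ) 2 \ ball (0 : ℝ × ℝ) 1

namespace AnnPf

theorem interval_induction (P : ℝ → Prop) (a b : ℝ) (hab : a ≤ b)
    (hstep : ∀ x ∈ Set.Icc a b, ∃ ε > 0, ∀ y z, x - ε < y → y ≤ z → z < x + ε →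
      y ∈ Set.Icc a b → z ∈ Set.Icc a b → P y → P z) (ha : P a) : P b := by
  choose! ε hε hs using hstep
  obtain ⟨δ, hδ, hL⟩ := lebesgue_number_lemma_of_metric (s := Set.Icc a b)
    (c := fun x : Set.Icc a b => Set.Ioo (x.1 - ε x.1) (x.1 + ε x.1)) isCompact_Icc
    (fun _ => isOpen_Ioo) (fun x hx => Set.mem_iUnion.2 ⟨⟨x, hx⟩, by
      have := hε x hx; constructor <;> simp <;> linarith⟩)
  have key : ∀ n : ℕ, P (min b (a + n * (δ / 2))) := by
    intro n
    induction n with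
    | zero => simpa [hab] using ha
    | succ n ih =>
      set y := min b (a + n * (δ / 2)) with hy
      set z := min b (a + (n + 1 : ℕ) * (δ / 2)) with hz
      have hn : (0 : ℝ) ≤ n * (δ / 2) := by positivity
      have hyz : y ≤ z := by
        apply min_le_min_left; push_cast; nlinarith
      have hya : a ≤ y := le_min hab (by linarith)
      have hyI : y ∈ Set.Icc a b := ⟨hya, min_le_left _ _⟩
      have hzI : z ∈ Set.Icc a b := ⟨hya.trans hyz, min_le_left _ _⟩
      obtain ⟨x, hx⟩ := hL y hyI
      have hzy : z - y < δ := by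
        rcases le_total b (a + n * (δ / 2)) with h | h
        · have : y = b := min_eq_left h
          have : z ≤ b := min_le_left _ _
          linarith
        · have h1 : y = a + n * (δ / 2) := min_eq_right h
          have : z ≤ a + (n + 1 : ℕ) * (δ / 2) := min_le_right _ _
          push_cast at this
          linarith
      have h1 := hx (mem_ball_self hδ)
      have h2 : z ∈ Set.Ioo (x.1 - ε x.1) (x.1 + ε x.1) := hx (by
        rw [mem_ball, Real.dist_eq, abs_of_nonneg (by linarith)]; exact hzy)
      exact hs x.1 x.2 y z h1.1 hyz h2.2 hyI hzI ih
  obtain ⟨n, hn⟩ := exists_nat_gt ((b - a) / (δ / 2))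
  have h := key n
  rw [div_lt_iff₀ (by positivity)] at hn
  rwa [min_eq_left (by linarith)] at h

/-- `f` admits a continuous logarithm on `S`. -/
def HasLog {X : Type*} [TopologicalSpace X] (f : X → ℂ) (S : Set X) : Prop :=
  ∃ h : X → ℂ, ContinuousOn h S ∧ ∀ z ∈ S, f z = Complex.exp (h z)

section
variable {X Y : Type*} [TopologicalSpace X] [TopologicalSpace Y] {f g : X → ℂ} {S T : Set X}

theorem HasLog.mono (h : HasLog f S) (hT : T ⊆ S) : HasLog f T := by
  obtain ⟨u, hu, hf⟩ := h
  exact ⟨u, hu.mono hT, fun z hz => hf z (hT hz)⟩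

theorem HasLog.congr (h : HasLog f S) (hg : ∀ z ∈ S, g z = f z) : HasLog g S := by
  obtain ⟨u, hu, hf⟩ := h
  exact ⟨u, hu, fun z hz => (hg z hz).trans (hf z hz)⟩

theorem HasLog.mul (h : HasLog f S) (h' : HasLog g S) : HasLog (fun z => f z * g z) S := by
  obtain ⟨u, hu, hf⟩ := h
  obtain ⟨v, hv, hg⟩ := h'
  exact ⟨fun z => u z + v z, hu.add hv, fun z hz => by
    simp only [Complex.exp_add, hf z hz, hg z hz]⟩

theorem HasLog.inv (h : HasLog f S) : HasLog (fun z => (f z)⁻¹) S := by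
  obtain ⟨u, hu, hf⟩ := h
  exact ⟨fun z => - u z, hu.neg, fun z hz => by
    simp only [Complex.exp_neg, hf z hz]⟩

theorem HasLog.zpow (h : HasLog f S) (k : ℤ) : HasLog (fun z => (f z) ^ k) S := by
  obtain ⟨u, hu, hf⟩ := h
  exact ⟨fun z => k * u z, continuousOn_const.mul hu, fun z hz => by
    simp only [Complex.exp_int_mul, hf z hz]⟩

theorem HasLog.const {c : ℂ} (hc : c ≠ 0) : HasLog (fun _ : X => c) S :=
  ⟨fun _ => Complex.log c, continuousOn_const, fun _ _ => (Complex.exp_log hc).symm⟩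

theorem HasLog.of_slit (hf : ContinuousOn f S) (h : ∀ z ∈ S, f z ∈ Complex.slitPlane) :
    HasLog f S :=
  ⟨fun z => Complex.log (f z), hf.clog h, fun z hz =>
    (Complex.exp_log (Complex.slitPlane_ne_zero (h z hz))).symm⟩

theorem HasLog.of_near (hf : ContinuousOn f S) (h : ∀ z ∈ S, ‖f z - 1‖ < 1) :
    HasLog f S := by
  refine HasLog.of_slit hf fun z hz => ?_
  have := Complex.mem_slitPlane_of_norm_lt_one (h z hz)
  simpa using this

theorem HasLog.comp (h : HasLog f S) {φ : Y → X} {T : Set Y} (hφ : ContinuousOn φ T)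
    (hm : Set.MapsTo φ T S) : HasLog (fun y => f (φ y)) T := by
  obtain ⟨u, hu, hf⟩ := h
  exact ⟨fun y => u (φ y), hu.comp hφ hm, fun z hz => hf _ (hm hz)⟩

theorem HasLog.glue {u v : X → ℂ} (hS : IsClosed S) (hT : IsClosed T)
    (hu : ContinuousOn u S) (hv : ContinuousOn v T)
    (hfu : ∀ z ∈ S, f z = Complex.exp (u z)) (hfv : ∀ z ∈ T, f z = Complex.exp (v z))
    (huv : ∀ z ∈ S, z ∈ T → u z = v z) : HasLog f (S ∪ T) := by
  classical
  refine ⟨fun z => if z ∈ S then u z else v z, ?_, ?_⟩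
  · apply ContinuousOn.union_of_isClosed _ _ hS hT
    · exact hu.congr fun z hz => if_pos hz
    · refine hv.congr fun z hz => ?_
      by_cases h : z ∈ S
      · simp only [if_pos h]; exact huv z h hz
      · simp only [if_neg h]
  · rintro z hz
    by_cases h : z ∈ S
    · simp only [if_pos h]; exact hfu z h
    · simp only [if_neg h]; exact hfv z (hz.resolve_left h)
end

theorem near_one_of_continuousOn {K : Set ℂ} {f : ℂ → ℂ} (hf : ContinuousOn f K) {p : ℂ}
    (hp : p ∈ K) (h0 : f p ≠ 0) :
    ∃ ε > 0, ∀ z ∈ K, dist z p < ε → ‖f z / f p - 1‖ < 1 := by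
  have h := (hf.div_const (f p)) p hp
  rw [Metric.continuousWithinAt_iff] at h
  obtain ⟨ε, hε, h⟩ := h 1 one_pos
  refine ⟨ε, hε, fun z hz hd => ?_⟩
  have := h hz hd
  simp only [div_self h0] at this
  rwa [dist_eq_norm] at this

theorem hasLog_line {K : Set ℂ} (hK : IsCompact K) {f : ℂ → ℂ} (hf : ContinuousOn f K)
    (h0 : ∀ z ∈ K, f z ≠ 0) (x : ℝ) : HasLog f (K ∩ {z | z.re = x}) := by
  obtain ⟨R, hR⟩ := hK.isBounded.exists_norm_le
  set R' := max R 0 + 1 with hR'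
  have hR'0 : 0 < R' := by positivity
  have hRR : ∀ z ∈ K, |z.im| < R' := fun z hz =>
    lt_of_le_of_lt ((Complex.abs_im_le_norm z).trans ((hR z hz).trans (le_max_left _ _)))
      (by rw [hR']; linarith)
  set Z : Set ℂ := K ∩ {z | z.re = x} with hZ
  have hZc : IsCompact Z := hK.inter_right (isClosed_eq Complex.continuous_re continuous_const)
  suffices H : HasLog f (Z ∩ {z | z.im ≤ R'}) by
    exact H.mono fun z hz => ⟨hz, (le_abs_self _).trans (hRR z hz.1).le⟩
  refine interval_induction (fun y => HasLog f (Z ∩ {z | z.im ≤ y})) (-R') R' (by linarith) ?_ ?_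
  · intro y _
    -- local log
    have hloc : ∃ ε > 0, HasLog f (Z ∩ {z | z.im ∈ Set.Ioo (y - ε) (y + ε)}) := by
      by_cases hp : (⟨x, y⟩ : ℂ) ∈ K
      · obtain ⟨ε, hε, h⟩ := near_one_of_continuousOn hf hp (h0 _ hp)
        refine ⟨ε, hε, ?_⟩
        have h1 : HasLog (fun z => f z / f ⟨x, y⟩) (Z ∩ {z | z.im ∈ Set.Ioo (y - ε) (y + ε)}) := by
          refine HasLog.of_near ((hf.mono fun z hz => hz.1.1).div_const _) fun z hz => ?_
          refine h z hz.1.1 ?_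
          have h2 : z.re = x := hz.1.2
          have h3 := hz.2
          simp only [Set.mem_ofPred_eq, Set.mem_Ioo] at h3
          rw [Complex.dist_of_re_eq (by simpa using h2), Real.dist_eq, abs_lt]
          constructor <;> simp <;> linarith
        refine (h1.mul (HasLog.const (h0 _ hp))).congr fun z _ => ?_
        field_simp [h0 _ hp]
      · obtain ⟨ε, hε, h⟩ := Metric.isOpen_iff.1 hK.isClosed.isOpen_compl _ hp
        refine ⟨ε, hε, ⟨0, continuousOn_const, fun z hz => ?_⟩⟩
        exfalso
        refine h (a := z) ?_ hz.1.1
        have h2 : z.re = x := hz.1.2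
        have h3 := hz.2
        simp only [Set.mem_ofPred_eq, Set.mem_Ioo] at h3
        rw [mem_ball, Complex.dist_of_re_eq (by simpa using h2), Real.dist_eq, abs_lt]
        constructor <;> simp <;> linarith
    obtain ⟨ε, hε, v, hv, hfv⟩ := hloc
    refine ⟨ε, hε, fun a b ha hab hb _ _ hP => ?_⟩
    obtain ⟨u, hu, hfu⟩ := hP
    have hsub : Z ∩ {z | z.im ∈ Set.Icc a b} ⊆ Z ∩ {z | z.im ∈ Set.Ioo (y - ε) (y + ε)} := by
      rintro z ⟨h1, h2, h3⟩
      exact ⟨h1, by linarith, by linarith⟩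
    have hcl1 : IsClosed (Z ∩ {z | z.im ≤ a}) :=
      hZc.isClosed.inter (isClosed_le Complex.continuous_im continuous_const)
    have hcl2 : IsClosed (Z ∩ {z | z.im ∈ Set.Icc a b}) :=
      hZc.isClosed.inter (isClosed_Icc.preimage Complex.continuous_im)
    set p : ℂ := ⟨x, a⟩ with hpdef
    have hpc : ∀ z ∈ Z ∩ {z | z.im ≤ a}, z ∈ Z ∩ {z | z.im ∈ Set.Icc a b} → z = p := by
      rintro z ⟨h1, h2⟩ ⟨_, h3, _⟩
      exact Complex.ext h1.2 (le_antisymm h2 h3)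
    have hc : ∃ c : ℂ, Complex.exp c = 1 ∧
        ∀ z ∈ Z ∩ {z | z.im ≤ a}, z ∈ Z ∩ {z | z.im ∈ Set.Icc a b} → u z = v z + c := by
      by_cases hpZ : p ∈ Z ∩ {z | z.im ≤ a} ∧ p ∈ Z ∩ {z | z.im ∈ Set.Icc a b}
      · refine ⟨u p - v p, ?_, ?_⟩
        · rw [Complex.exp_sub, ← hfu p hpZ.1, ← hfv p (hsub hpZ.2), div_self (h0 p hpZ.1.1.1)]
        · intro z h1 h2
          rw [hpc z h1 h2]; ring
      · refine ⟨0, Complex.exp_zero, fun z h1 h2 => (hpZ ?_).elim⟩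
        rw [← hpc z h1 h2]; exact ⟨h1, h2⟩
    obtain ⟨c, hc1, hc2⟩ := hc
    refine (HasLog.glue hcl1 hcl2 hu ((hv.mono hsub).add continuousOn_const) hfu
      (v := fun z => v z + c) (fun z hz => ?_) hc2).mono ?_
    · rw [Complex.exp_add, hc1, mul_one]; exact hfv z (hsub hz)
    · rintro z ⟨h1, h2⟩
      rcases le_total z.im a with h | h
      · exact Or.inl ⟨h1, h⟩
      · exact Or.inr ⟨h1, h, h2⟩
  · refine ⟨0, continuousOn_const, fun z hz => ?_⟩
    have := abs_lt.1 (hRR z hz.1.1)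
    have h2 : z.im ≤ -R' := hz.2
    linarith

theorem tietze {X : Type*} [TopologicalSpace X] [NormalSpace X] {S : Set X} (hS : IsClosed S)
    {h : X → ℂ} (hh : ContinuousOn h S) : ∃ H : X → ℂ, Continuous H ∧ ∀ z ∈ S, H z = h z := by
  obtain ⟨g, hg⟩ := ContinuousMap.exists_restrict_eq hS (⟨S.domRestrict h, hh.domRestrict⟩ : C(S, ℂ))
  refine ⟨g, g.continuous, fun z hz => ?_⟩
  have := congrArg (fun k => k ⟨z, hz⟩) hg
  exact this

theorem hasLog_strip {K : Set ℂ} (hK : IsCompact K) {f : ℂ → ℂ} (hf : ContinuousOn f K)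
    (h0 : ∀ z ∈ K, f z ≠ 0) (x : ℝ) :
    ∃ ε > 0, HasLog f (K ∩ {z | z.re ∈ Set.Ioo (x - ε) (x + ε)}) := by
  obtain ⟨h, hh, hfh⟩ := hasLog_line hK hf h0 x
  obtain ⟨H, hH, hHh⟩ := tietze
    (hK.isClosed.inter (isClosed_eq Complex.continuous_re continuous_const)) hh
  set g : ℂ → ℂ := fun z => f z * Complex.exp (- H z) with hg
  have hgc : ContinuousOn g K := hf.mul (Complex.continuous_exp.comp hH.neg).continuousOn
  set B : Set ℂ := K ∩ g ⁻¹' {w | 1 ≤ ‖w - 1‖} with hB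
  have hBc : IsCompact B := by
    have : IsClosed B := hgc.preimage_isClosed_of_isClosed hK.isClosed
      (isClosed_le continuous_const (by fun_prop))
    exact hK.of_isClosed_subset this Set.inter_subset_left
  have key : ∃ ε > 0, ∀ z ∈ B, ε ≤ |z.re - x| := by
    rcases B.eq_empty_or_nonempty with hE | hne
    · exact ⟨1, one_pos, by simp [hE]⟩
    · obtain ⟨p, hp, hmin⟩ := hBc.exists_isMinOn hne
        (f := fun z : ℂ => |z.re - x|) (by fun_prop)
      refine ⟨|p.re - x|, ?_, fun z hz => hmin hz⟩
      rw [gt_iff_lt, abs_pos, sub_ne_zero]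
      intro hpx
      have h1 : (1 : ℝ) ≤ ‖g p - 1‖ := hp.2
      have h2 : g p = 1 := by
        have : p ∈ K ∩ {z | z.re = x} := ⟨hp.1, hpx⟩
        simp only [hg]
        rw [hHh p this, hfh p this, ← Complex.exp_add]; simp
      rw [h2] at h1; norm_num at h1
  obtain ⟨ε, hε, hk⟩ := key
  refine ⟨ε, hε, ?_⟩
  have h1 : HasLog g (K ∩ {z | z.re ∈ Set.Ioo (x - ε) (x + ε)}) := by
    refine HasLog.of_near (hgc.mono Set.inter_subset_left) fun z hz => ?_
    by_contra hcon
    have := hk z ⟨hz.1, not_lt.1 hcon⟩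
    have h3 := hz.2
    simp only [Set.mem_ofPred_eq, Set.mem_Ioo] at h3
    have : |z.re - x| < ε := by rw [abs_lt]; constructor <;> linarith
    linarith
  have h2 : HasLog (fun z => Complex.exp (H z)) (K ∩ {z | z.re ∈ Set.Ioo (x - ε) (x + ε)}) :=
    ⟨H, hH.continuousOn, fun _ _ => rfl⟩
  refine (h1.mul h2).congr fun z _ => ?_
  simp only [hg]
  rw [mul_assoc, ← Complex.exp_add]; simp

end AnnPf

namespace AnnPf

theorem int_step {Z : Set ℂ} (hZ : IsCompact Z) (x : ℝ) (hx : ∀ z ∈ Z, z.re = x) (n : ℂ → ℤ)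
    (hn : ContinuousOn (fun z => (n z : ℂ)) Z) :
    ∃ l : List (ℂ × ℤ), (∀ p ∈ l, p.1.re = x ∧ p.1 ∉ Z) ∧
      ∀ z ∈ Z, n z = (l.map fun p => if p.1.im < z.im then p.2 else 0).sum := by
  obtain ⟨R, hR⟩ := hZ.isBounded.exists_norm_le
  set R' := max R 0 + 1 with hR'
  have hR'0 : 0 < R' := by positivity
  have hRR : ∀ z ∈ Z, |z.im| < R' := fun z hz =>
    lt_of_le_of_lt ((Complex.abs_im_le_norm z).trans ((hR z hz).trans (le_max_left _ _)))
      (by rw [hR']; linarith)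
  have main : ∃ l : List (ℂ × ℤ), (∀ p ∈ l, p.1.re = x ∧ p.1 ∉ Z ∧ p.1.im < R') ∧
      ∀ z ∈ Z, z.im ≤ R' → n z = (l.map fun p => if p.1.im < z.im then p.2 else 0).sum := by
    refine interval_induction (fun y => ∃ l : List (ℂ × ℤ),
      (∀ p ∈ l, p.1.re = x ∧ p.1 ∉ Z ∧ p.1.im < y) ∧
      ∀ z ∈ Z, z.im ≤ y → n z = (l.map fun p => if p.1.im < z.im then p.2 else 0).sum)
      (-R') R' (by linarith) ?_ ?_
    · intro t _
      have hloc : ∃ ε > 0, ∃ n1 : ℤ, ∀ z ∈ Z, z.im ∈ Set.Ioo (t - ε) (t + ε) → n z = n1 := by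
        by_cases hp : (⟨x, t⟩ : ℂ) ∈ Z
        · have h := hn _ hp
          rw [Metric.continuousWithinAt_iff] at h
          obtain ⟨ε, hε, h⟩ := h 1 one_pos
          refine ⟨ε, hε, n ⟨x, t⟩, fun z hz hzt => ?_⟩
          have h1 : dist z ⟨x, t⟩ < ε := by
            rw [Complex.dist_of_re_eq (by simpa using hx z hz), Real.dist_eq, abs_lt]
            constructor <;> simp <;> linarith [hzt.1, hzt.2]
          have h2 := h hz h1
          rw [dist_eq_norm, ← Int.cast_sub, Complex.norm_intCast] at h2
          have h3 : |n z - n ⟨x, t⟩| < 1 := by exact_mod_cast h2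
          have := Int.abs_lt_one_iff.1 h3
          omega
        · obtain ⟨ε, hε, h⟩ := Metric.isOpen_iff.1 hZ.isClosed.isOpen_compl _ hp
          refine ⟨ε, hε, 0, fun z hz hzt => ?_⟩
          exfalso
          refine h (a := z) ?_ hz
          rw [mem_ball, Complex.dist_of_re_eq (by simpa using hx z hz), Real.dist_eq, abs_lt]
          constructor <;> simp <;> linarith [hzt.1, hzt.2]
      obtain ⟨ε, hε, n1, hn1⟩ := hloc
      refine ⟨ε, hε, fun a b ha hab hb _ _ hP => ?_⟩
      rcases hab.eq_or_lt with rfl | hlt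
      · exact hP
      obtain ⟨l, hl, hs⟩ := hP
      have htot : ∀ z : ℂ, a ≤ z.im →
          (l.map fun p => if p.1.im < z.im then p.2 else 0).sum = (l.map fun p => p.2).sum := by
        intro z hz
        congr 1
        refine List.map_congr_left fun p hp => ?_
        rw [if_pos (lt_of_lt_of_le (hl p hp).2.2 hz)]
      by_cases hp : (⟨x, a⟩ : ℂ) ∈ Z
      · refine ⟨l, fun p hp => ⟨(hl p hp).1, (hl p hp).2.1, (hl p hp).2.2.trans hlt⟩, ?_⟩
        intro z hz hzb
        rcases le_total z.im a with h | h
        · exact hs z hz h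
        · rw [htot z h, hn1 z hz ⟨by linarith, by linarith⟩,
            ← htot ⟨x, a⟩ le_rfl, ← hs _ hp le_rfl, hn1 _ hp ⟨by simpa using ha, by simp; linarith⟩]
      · refine ⟨(⟨x, a⟩, n1 - (l.map fun p => p.2).sum) :: l, ?_, ?_⟩
        · intro p hp'
          rcases List.mem_cons.1 hp' with rfl | h
          · exact ⟨rfl, hp, hlt⟩
          · exact ⟨(hl p h).1, (hl p h).2.1, (hl p h).2.2.trans hlt⟩
        · intro z hz hzb
          rw [List.map_cons, List.sum_cons]
          have hne : z.im ≠ a := fun h => hp (by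
            have : z = ⟨x, a⟩ := Complex.ext (hx z hz) h
            rwa [← this])
          rcases hne.lt_or_gt with h | h
          · rw [if_neg (by simpa using h.le), zero_add]; exact hs z hz h.le
          · rw [if_pos (by simpa using h), htot z h.le, hn1 z hz ⟨by linarith, by linarith⟩]
            ring
    · refine ⟨[], by simp, fun z hz h => ?_⟩
      have := abs_lt.1 (hRR z hz)
      linarith
  obtain ⟨l, hl, hs⟩ := main
  exact ⟨l, fun p hp => ⟨(hl p hp).1, (hl p hp).2.1⟩, fun z hz =>
    hs z hz ((le_abs_self _).trans (hRR z hz).le)⟩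

/-- finite product of integer powers of linear factors -/
noncomputable def rr (l : List (ℂ × ℤ)) (z : ℂ) : ℂ := (l.map fun p => (z - p.1) ^ p.2).prod

theorem rr_append (l l' : List (ℂ × ℤ)) (z : ℂ) : rr (l ++ l') z = rr l z * rr l' z := by
  simp [rr]

theorem rr_cons (p : ℂ × ℤ) (l : List (ℂ × ℤ)) (z : ℂ) :
    rr (p :: l) z = (z - p.1) ^ p.2 * rr l z := by
  simp [rr]

theorem HasLog.rr_of {X : Type*} [TopologicalSpace X] {S : Set X} {φ : X → ℂ} (l : List (ℂ × ℤ))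
    (h : ∀ p ∈ l, HasLog (fun z => φ z - p.1) S) : HasLog (fun z => rr l (φ z)) S := by
  induction l with
  | nil => exact (HasLog.const one_ne_zero).congr fun z _ => by simp [rr]
  | cons p l ih =>
    refine (((h p (by simp)).zpow p.2).mul (ih fun q hq => h q (by simp [hq]))).congr ?_
    intro z _
    simp [rr_cons]

/-- log branch on right half plane -/
noncomputable def Lp (c z : ℂ) : ℂ := Complex.log (z - c)
/-- log branch on left half plane -/
noncomputable def Lm (c z : ℂ) : ℂ := Complex.log (-(z - c)) - Real.pi * Complex.I

theorem slit_of_re_nonneg {w : ℂ} (h : 0 ≤ w.re) (h0 : w ≠ 0) : w ∈ Complex.slitPlane := by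
  rw [Complex.mem_slitPlane_iff]
  by_contra hc
  push Not at hc
  exact h0 (Complex.ext (le_antisymm hc.1 h) hc.2)

theorem exp_Lp {c z : ℂ} (h : z ≠ c) : Complex.exp (Lp c z) = z - c :=
  Complex.exp_log (sub_ne_zero.2 h)

theorem exp_Lm {c z : ℂ} (h : z ≠ c) : Complex.exp (Lm c z) = z - c := by
  rw [Lm, Complex.exp_sub, Complex.exp_log (neg_ne_zero.2 (sub_ne_zero.2 h)), Complex.exp_pi_mul_I]
  ring

theorem cont_Lp {c : ℂ} {S : Set ℂ} (h : ∀ z ∈ S, c.re ≤ z.re ∧ z ≠ c) :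
    ContinuousOn (Lp c) S := by
  refine ContinuousOn.clog (by fun_prop) fun z hz => ?_
  exact slit_of_re_nonneg (by simpa using (h z hz).1) (sub_ne_zero.2 (h z hz).2)

theorem cont_Lm {c : ℂ} {S : Set ℂ} (h : ∀ z ∈ S, z.re ≤ c.re ∧ z ≠ c) :
    ContinuousOn (Lm c) S := by
  refine ContinuousOn.sub (ContinuousOn.clog (by fun_prop) fun z hz => ?_) continuousOn_const
  exact slit_of_re_nonneg (by simpa using (h z hz).1) (neg_ne_zero.2 (sub_ne_zero.2 (h z hz).2))

theorem Lp_sub_Lm {c z : ℂ} (hre : z.re = c.re) (h : z ≠ c) :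
    Lp c z - Lm c z = (if c.im < z.im then (1 : ℂ) else 0) * (2 * Real.pi * Complex.I) := by
  have hne : z.im ≠ c.im := fun h' => h (Complex.ext hre h')
  set w := z - c with hw
  have hwre : w.re = 0 := by simp [hw, hre]
  have hwim : w.im = z.im - c.im := by simp [hw]
  simp only [Lp, Lm, ← hw, Complex.log, norm_neg]
  split_ifs with hlt
  · have h1 : Complex.arg w = Real.pi / 2 := by
      rw [Complex.arg_eq_pi_div_two_iff]; exact ⟨hwre, by linarith⟩
    have h2 : Complex.arg (-w) = -(Real.pi / 2) := by
      rw [Complex.arg_eq_neg_pi_div_two_iff]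
      exact ⟨by simp [hwre], by rw [Complex.neg_im]; linarith⟩
    rw [h1, h2]; push_cast; ring
  · have hlt' : z.im < c.im := lt_of_le_of_ne (not_lt.1 hlt) hne
    have h1 : Complex.arg (-w) = Real.pi / 2 := by
      rw [Complex.arg_eq_pi_div_two_iff]
      exact ⟨by simp [hwre], by rw [Complex.neg_im]; linarith⟩
    have h2 : Complex.arg w = -(Real.pi / 2) := by
      rw [Complex.arg_eq_neg_pi_div_two_iff]
      exact ⟨hwre, by linarith⟩
    rw [h1, h2]; push_cast; ring

theorem rr_logs (l : List (ℂ × ℤ)) (x : ℝ) (K : Set ℂ) (hl : ∀ p ∈ l, p.1.re = x ∧ p.1 ∉ K) :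
    ∃ u v : ℂ → ℂ, ContinuousOn u (K ∩ {z | z.re ≤ x}) ∧ ContinuousOn v (K ∩ {z | x ≤ z.re}) ∧
      (∀ z ∈ K, rr l z = Complex.exp (u z)) ∧ (∀ z ∈ K, rr l z = Complex.exp (v z)) ∧
      ∀ z ∈ K, z.re = x → v z - u z =
        ((l.map fun p => if p.1.im < z.im then p.2 else 0).sum : ℤ) * (2 * Real.pi * Complex.I) := by
  induction l with
  | nil =>
    refine ⟨0, 0, continuousOn_const, continuousOn_const, ?_, ?_, ?_⟩ <;> simp [rr]
  | cons p l ih =>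
    obtain ⟨u, v, hu, hv, h1, h2, h3⟩ := ih fun q hq => hl q (by simp [hq])
    obtain ⟨hpx, hpK⟩ := hl p (by simp)
    have hne : ∀ z ∈ K, z ≠ p.1 := fun z hz h => hpK (h ▸ hz)
    refine ⟨fun z => p.2 * Lm p.1 z + u z, fun z => p.2 * Lp p.1 z + v z, ?_, ?_, ?_, ?_, ?_⟩
    · exact (continuousOn_const.mul (cont_Lm fun z hz => ⟨hpx ▸ hz.2, hne z hz.1⟩)).add hu
    · exact (continuousOn_const.mul (cont_Lp fun z hz => ⟨hpx ▸ hz.2, hne z hz.1⟩)).add hv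
    · intro z hz
      rw [rr_cons, Complex.exp_add, Complex.exp_int_mul, exp_Lm (hne z hz), h1 z hz]
    · intro z hz
      rw [rr_cons, Complex.exp_add, Complex.exp_int_mul, exp_Lp (hne z hz), h2 z hz]
    · intro z hz hzx
      have h4 := Lp_sub_Lm (c := p.1) (z := z) (hzx.trans hpx.symm) (hne z hz)
      have h5 := h3 z hz hzx
      rw [List.map_cons, List.sum_cons, Int.cast_add, add_mul, ← h5]
      have : p.2 * Lp p.1 z + v z - (p.2 * Lm p.1 z + u z) =
        p.2 * (Lp p.1 z - Lm p.1 z) + (v z - u z) := by ring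
      rw [this, h4]
      split_ifs <;> simp

theorem sum_neg_aux (l : List (ℂ × ℤ)) (z : ℂ) :
    (l.map ((fun p : ℂ × ℤ => if p.1.im < z.im then p.2 else 0) ∘ fun p => (p.1, -p.2))).sum =
      -(l.map fun p => if p.1.im < z.im then p.2 else 0).sum := by
  induction l with
  | nil => simp
  | cons p l ih =>
    simp only [List.map_cons, List.sum_cons, ih, Function.comp]
    split_ifs <;> ring

/-- Eilenberg's theorem. -/
theorem eilenberg {K : Set ℂ} (hK : IsCompact K) {f : ℂ → ℂ} (hf : ContinuousOn f K)
    (h0 : ∀ z ∈ K, f z ≠ 0) :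
    ∃ l : List (ℂ × ℤ), (∀ p ∈ l, p.1 ∉ K) ∧ HasLog (fun z => f z * rr l z) K := by
  obtain ⟨R, hR⟩ := hK.isBounded.exists_norm_le
  set R' := max R 0 + 1 with hR'
  have hR'0 : 0 < R' := by positivity
  have hRR : ∀ z ∈ K, |z.re| < R' := fun z hz =>
    lt_of_le_of_lt ((Complex.abs_re_le_norm z).trans ((hR z hz).trans (le_max_left _ _)))
      (by rw [hR']; linarith)
  have main : ∃ l : List (ℂ × ℤ), (∀ p ∈ l, p.1 ∉ K ∧ p.1.re < R') ∧
      HasLog (fun z => f z * rr l z) (K ∩ {z | z.re ≤ R'}) := by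
    refine interval_induction (fun x => ∃ l : List (ℂ × ℤ), (∀ p ∈ l, p.1 ∉ K ∧ p.1.re < x) ∧
      HasLog (fun z => f z * rr l z) (K ∩ {z | z.re ≤ x})) (-R') R' (by linarith) ?_ ?_
    · intro t _
      obtain ⟨ε, hε, hlog⟩ := hasLog_strip hK hf h0 t
      refine ⟨ε, hε, fun a b ha hab hb _ _ hP => ?_⟩
      rcases hab.eq_or_lt with rfl | hlt
      · exact hP
      obtain ⟨l, hl, h, hh, hfh⟩ := hP
      have hr : HasLog (rr l) (K ∩ {z | a ≤ z.re}) := by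
        refine HasLog.rr_of (φ := id) l fun p hp => HasLog.of_slit (by fun_prop) fun z hz => ?_
        refine slit_of_re_nonneg ?_ (sub_ne_zero.2 fun h => (hl p hp).1 (h ▸ hz.1))
        have := (hl p hp).2
        have h2 : a ≤ z.re := hz.2
        simp; linarith
      have hsub : K ∩ {z | z.re ∈ Set.Icc a b} ⊆ K ∩ {z | z.re ∈ Set.Ioo (t - ε) (t + ε)} := by
        rintro z ⟨h1, h2, h3⟩
        exact ⟨h1, by linarith, by linarith⟩
      obtain ⟨g, hg, hfg⟩ := (hlog.mono hsub).mul (hr.mono (T := K ∩ {z | z.re ∈ Set.Icc a b})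
        fun z hz => ⟨hz.1, hz.2.1⟩)
      set Z : Set ℂ := K ∩ {z | z.re = a} with hZ
      have hZc : IsCompact Z :=
        hK.inter_right (isClosed_eq Complex.continuous_re continuous_const)
      have hZ1 : Z ⊆ K ∩ {z | z.re ≤ a} := fun z hz => ⟨hz.1, le_of_eq hz.2⟩
      have hZ2 : Z ⊆ K ∩ {z | z.re ∈ Set.Icc a b} := fun z hz =>
        ⟨hz.1, le_of_eq hz.2.symm, (le_of_eq hz.2).trans hab⟩
      have hex : ∀ z ∈ Z, ∃ n : ℤ, g z = h z + n * (2 * Real.pi * Complex.I) := by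
        intro z hz
        rw [← Complex.exp_eq_exp_iff_exists_int, ← hfg z (hZ2 hz), ← hfh z (hZ1 hz)]
      choose! n hn using hex
      have hnc : ContinuousOn (fun z => (n z : ℂ)) Z := by
        refine (((hg.mono hZ2).sub (hh.mono hZ1)).div_const (2 * Real.pi * Complex.I)).congr ?_
        intro z hz
        rw [eq_div_iff Complex.two_pi_I_ne_zero, Pi.sub_apply, hn z hz]
        ring
      obtain ⟨l', hl', hs⟩ := int_step hZc a (fun z hz => hz.2) n hnc
      set l'' := l'.map fun p => (p.1, -p.2) with hl''
      have hmem : ∀ p ∈ l'', p.1.re = a ∧ p.1 ∉ K := by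
        intro p hp
        obtain ⟨q, hq, rfl⟩ := List.mem_map.1 hp
        exact ⟨(hl' q hq).1, fun h => (hl' q hq).2 ⟨h, (hl' q hq).1⟩⟩
      obtain ⟨u, v, hu, hv, h1, h2, h3⟩ := rr_logs l'' a K hmem
      refine ⟨l ++ l'', ?_, ?_⟩
      · intro p hp
        rcases List.mem_append.1 hp with h | h
        · exact ⟨(hl p h).1, (hl p h).2.trans hlt⟩
        · exact ⟨(hmem p h).2, by rw [(hmem p h).1]; exact hlt⟩
      · have hcl1 : IsClosed (K ∩ {z | z.re ≤ a}) :=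
          hK.isClosed.inter (isClosed_le Complex.continuous_re continuous_const)
        have hcl2 : IsClosed (K ∩ {z | z.re ∈ Set.Icc a b}) :=
          hK.isClosed.inter (isClosed_Icc.preimage Complex.continuous_re)
        refine (HasLog.glue hcl1 hcl2 (hh.add hu)
          (hg.add (hv.mono fun z hz => ⟨hz.1, hz.2.1⟩)) ?_ ?_ ?_).mono ?_
        · intro z hz
          rw [rr_append, ← mul_assoc]
          simp only [Pi.add_apply, Complex.exp_add]
          rw [← hfh z hz, ← h1 z hz.1]
        · intro z hz
          rw [rr_append, ← mul_assoc]
          simp only [Pi.add_apply, Complex.exp_add]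
          rw [← hfg z hz, ← h2 z hz.1]
        · intro z hz1 hz2
          have hza : z.re = a := le_antisymm hz1.2 hz2.2.1
          have h4 := h3 z hz1.1 hza
          have h5 : (l''.map fun p => if p.1.im < z.im then p.2 else 0).sum = - n z := by
            rw [hs z ⟨hz1.1, hza⟩, hl'', List.map_map]
            exact sum_neg_aux l' z
          rw [h5] at h4
          have h6 := hn z ⟨hz1.1, hza⟩
          simp only [Pi.add_apply, h6]
          push_cast at h4
          linear_combination -h4
        · rintro z ⟨h1, h2⟩
          rcases le_total z.re a with h | h
          · exact Or.inl ⟨h1, h⟩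
          · exact Or.inr ⟨h1, h, h2⟩
    · refine ⟨[], by simp, 0, continuousOn_const, fun z hz => ?_⟩
      have := abs_lt.1 (hRR z hz.1)
      have h2 : z.re ≤ -R' := hz.2
      linarith
  obtain ⟨l, hl, hs⟩ := main
  exact ⟨l, fun p hp => (hl p hp).1, hs.mono fun z hz =>
    ⟨hz, (le_abs_self _).trans (hRR z hz).le⟩⟩

end AnnPf

namespace AnnPf

theorem move_local {K : Set ℂ} {c c' : ℂ} (h : ∀ z ∈ K, dist c c' < dist z c) :
    HasLog (fun z => (z - c') / (z - c)) K := by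
  have hne : ∀ z ∈ K, z - c ≠ 0 := fun z hz h0 => by
    have := h z hz
    rw [sub_eq_zero.1 h0, dist_self] at this
    exact absurd this (not_lt.2 dist_nonneg)
  refine HasLog.of_near (ContinuousOn.div (by fun_prop) (by fun_prop) hne) fun z hz => ?_
  have h1 : (z - c') / (z - c) - 1 = (c - c') / (z - c) := by
    field_simp [hne z hz]; ring
  rw [h1, norm_div, div_lt_one (norm_pos_iff.2 (hne z hz)), ← dist_eq_norm, ← dist_eq_norm]
  exact h z hz

theorem move {K : Set ℂ} (hK : IsCompact K) {S : Set ℂ} (hS : IsPreconnected S) (hSK : S ⊆ Kᶜ)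
    {c c' : ℂ} (hc : c ∈ S) (hc' : c' ∈ S) : HasLog (fun z => (z - c') / (z - c)) K := by
  have hne : ∀ x ∈ S, ∀ z ∈ K, z - x ≠ 0 := fun x hx z hz h0 => hSK hx (sub_eq_zero.1 h0 ▸ hz)
  refine hS.induction₂ (fun c c' => HasLog (fun z => (z - c') / (z - c)) K) ?_ ?_ ?_ hc hc'
  · intro x hx
    obtain ⟨ε, hε, hb⟩ := Metric.isOpen_iff.1 hK.isClosed.isOpen_compl x (hSK hx)
    filter_upwards [mem_nhdsWithin_of_mem_nhds (ball_mem_nhds x hε)] with y hy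
    refine move_local fun z hz => lt_of_lt_of_le (by rwa [dist_comm]) (not_lt.1 fun h => hb h hz)
  · intro x y w hx hy hw h1 h2
    refine (h1.mul h2).congr fun z hz => ?_
    have := hne x hx z hz
    have := hne y hy z hz
    field_simp
  · intro x y hx hy h
    refine h.inv.congr fun z hz => ?_
    rw [inv_div]

theorem hasLog_ball (y : ℂ) {r : ℝ} {f : ℂ → ℂ} (hf : ContinuousOn f (closedBall y r))
    (h0 : ∀ z ∈ closedBall y r, f z ≠ 0) : HasLog f (closedBall y r) := by
  obtain ⟨l, hl, hlog⟩ := eilenberg (isCompact_closedBall y r) hf h0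
  have hr : HasLog (rr l) (closedBall y r) := by
    refine HasLog.rr_of (φ := id) l fun p hp => ?_
    have hp' : r < dist p.1 y := not_le.1 (hl p hp)
    by_cases hr : 0 ≤ r
    · have hne : y - p.1 ≠ 0 := fun h => by
        rw [sub_eq_zero] at h; rw [h, dist_self] at hp'; linarith
      have h1 : HasLog (fun z => (z - p.1) / (y - p.1)) (closedBall y r) := by
        refine HasLog.of_near (by fun_prop) fun z hz => ?_
        have : (z - p.1) / (y - p.1) - 1 = (z - y) / (y - p.1) := by field_simp [hne]; ring
        rw [this, norm_div, div_lt_one (norm_pos_iff.2 hne), ← dist_eq_norm, ← dist_eq_norm,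
          dist_comm y]
        exact lt_of_le_of_lt hz hp'
      exact (h1.mul (HasLog.const hne)).congr fun z _ => by field_simp [hne]; rfl
    · rw [closedBall_eq_empty.2 (not_le.1 hr)]
      exact ⟨0, continuousOn_const, by simp⟩
  have hrn : ∀ z ∈ closedBall y r, rr l z ≠ 0 := by
    obtain ⟨u, _, hu⟩ := hr
    intro z hz
    rw [hu z hz]; exact Complex.exp_ne_zero _
  refine (hlog.mul hr.inv).congr fun z hz => ?_
  have := hrn z hz
  field_simp

theorem const_of_exp_one {X : Type*} [TopologicalSpace X] {S : Set X} (hS : IsPreconnected S)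
    {φ : X → ℂ} (hφ : ContinuousOn φ S) (h : ∀ x ∈ S, Complex.exp (φ x) = 1) {a b : X}
    (ha : a ∈ S) (hb : b ∈ S) : φ a = φ b := by
  refine hS.induction₂ (fun a b => φ a = φ b) ?_ (fun _ _ _ _ _ _ h1 h2 => h1.trans h2)
    (fun _ _ _ _ h => h.symm) ha hb
  intro x hx
  have h1 := hφ x hx
  have h2 := h1 (ball_mem_nhds (φ x) one_pos)
  filter_upwards [h2, self_mem_nhdsWithin] with y hy hyS
  have h3 : Complex.exp (φ y - φ x) = 1 := by rw [Complex.exp_sub, h x hx, h y hyS, div_one]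
  obtain ⟨n, hn⟩ := Complex.exp_eq_one_iff.1 h3
  have h4 : ‖φ y - φ x‖ < 1 := by
    have : φ y ∈ ball (φ x) 1 := hy
    rwa [mem_ball, dist_eq_norm] at this
  rw [hn] at h4
  simp only [norm_mul, Complex.norm_intCast, Complex.norm_I, Complex.norm_real, Complex.norm_ofNat,
    mul_one, Real.norm_eq_abs, abs_of_pos Real.pi_pos] at h4
  have h5 : |(n : ℝ)| < 1 := by
    have := Real.pi_gt_three
    have h6 := abs_nonneg (n : ℝ)
    nlinarith
  have h6 : |n| < 1 := by exact_mod_cast h5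
  have h7 := Int.abs_lt_one_iff.1 h6
  rw [h7] at hn
  simp at hn
  exact (sub_eq_zero.1 hn).symm

theorem no_log_circle (y : ℂ) {r : ℝ} (hr : 0 < r)
    (h : HasLog (fun z => z - y) (sphere y r)) : False := by
  obtain ⟨u, hu, hz⟩ := h
  set z : ℝ → ℂ := fun t => y + Complex.exp (Real.log r + t * Complex.I) with hzdef
  have hzm : ∀ t, z t ∈ sphere y r := by
    intro t
    simp [hzdef, Complex.norm_exp, Real.exp_log hr]
  have hzc : Continuous z := by fun_prop
  have hc : Continuous fun t : ℝ => u (z t) - (Real.log r + t * Complex.I) :=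
    (hu.comp_continuous hzc hzm).sub (by fun_prop)
  have := const_of_exp_one (S := Set.univ) isPreconnected_univ hc.continuousOn (fun t _ => by
    rw [Complex.exp_sub, ← hz _ (hzm t)]
    simp [hzdef]) (Set.mem_univ (0 : ℝ)) (Set.mem_univ (2 * Real.pi))
  have h2 : z 0 = z (2 * Real.pi) := by
    simp [hzdef, Complex.exp_add]
  rw [h2] at this
  have h3 : (2 * Real.pi : ℂ) * Complex.I = 0 := by
    push_cast at this
    linear_combination this
  exact Complex.two_pi_I_ne_zero h3

theorem cont_inverse {X Y : Type*} [TopologicalSpace X] [TopologicalSpace Y] [T2Space Y]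
    [Nonempty X] {K : Set X} (hK : IsCompact K) {g : X → Y} (hg : ContinuousOn g K)
    (hi : Set.InjOn g K) : ∃ g' : Y → X, ContinuousOn g' (g '' K) ∧ ∀ x ∈ K, g' (g x) = x := by
  refine ⟨Function.invFunOn g K, ?_, fun x hx => hi.leftInvOn_invFunOn hx⟩
  rw [continuousOn_iff_isClosed]
  intro t ht
  refine ⟨g '' (K ∩ t), ?_, ?_⟩
  · exact ((hK.inter_right ht).image_of_continuousOn (hg.mono Set.inter_subset_left)).isClosed
  · ext w
    constructor
    · rintro ⟨h1, ⟨x, hx, rfl⟩⟩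
      rw [Set.mem_preimage, hi.leftInvOn_invFunOn hx] at h1
      exact ⟨⟨x, ⟨hx, h1⟩, rfl⟩, x, hx, rfl⟩
    · rintro ⟨⟨x, ⟨hx, hxt⟩, rfl⟩, _⟩
      refine ⟨?_, x, hx, rfl⟩
      rw [Set.mem_preimage, hi.leftInvOn_invFunOn hx]; exact hxt

theorem invDomain_pt {y : ℂ} {r : ℝ} (hr : 0 < r) {g : ℂ → ℂ}
    (hg : ContinuousOn g (closedBall y r)) (hi : Set.InjOn g (closedBall y r)) :
    g y ∈ interior (g '' closedBall y r) := by
  by_contra hcon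
  set D := g '' closedBall y r with hD
  set J := g '' sphere y r with hJ
  have hsub : sphere y r ⊆ closedBall y r := sphere_subset_closedBall
  have hyB : y ∈ closedBall y r := mem_closedBall_self hr.le
  have hJc : IsCompact J := (isCompact_sphere y r).image_of_continuousOn (hg.mono hsub)
  obtain ⟨q, hq, hqg⟩ := cont_inverse (isCompact_sphere y r) (hg.mono hsub) (hi.mono hsub)
  obtain ⟨l, hl, hlog⟩ := eilenberg hJc (f := fun w => q w - y) (hq.sub continuousOn_const) (by
    rintro _ ⟨x, hx, rfl⟩
    rw [hqg x hx, sub_ne_zero]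
    rintro rfl
    simp at hx; linarith)
  have hgyJ : g y ∉ J := by
    rintro ⟨x, hx, hxy⟩
    have := hi (hsub hx) hyB hxy
    rw [this] at hx
    simp at hx; linarith
  have hout : ∀ c, c ∉ D → HasLog (fun w => w - c) J → True := fun _ _ _ => trivial
  -- log of factors pulled back
  have hfac : ∀ c, c ∉ J → HasLog (fun z => g z - c) (sphere y r) := by
    have h1 : ∀ c, c ∉ D → HasLog (fun z => g z - c) (sphere y r) := by
      intro c hc
      refine (hasLog_ball y (hg.sub continuousOn_const) fun z hz h0 => hc ?_).mono hsub
      exact ⟨z, hz, sub_eq_zero.1 h0⟩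
    intro c hc
    by_cases hcD : c ∈ D
    swap
    · exact h1 c hcD
    obtain ⟨ε, hε, hb⟩ := Metric.isOpen_iff.1 hJc.isClosed.isOpen_compl _ hgyJ
    have : ∃ c' ∈ ball (g y) ε, c' ∉ D := by
      by_contra hno
      push Not at hno
      exact hcon (mem_interior.2 ⟨ball (g y) ε, hno, isOpen_ball, mem_ball_self hε⟩)
    obtain ⟨c', hc'b, hc'D⟩ := this
    have hpre : IsPreconnected (g '' ball y r ∪ ball (g y) ε) := by
      refine IsPreconnected.union (g y) ⟨y, mem_ball_self hr, rfl⟩ (mem_ball_self hε) ?_ ?_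
      · exact (convex_ball y r).isPreconnected.image _ (hg.mono ball_subset_closedBall)
      · exact (convex_ball _ _).isPreconnected
    have hm : HasLog (fun w => (w - c) / (w - c')) J := by
      refine move hJc hpre ?_ (Or.inr hc'b) (Or.inl ?_)
      · rintro w (⟨x, hx, rfl⟩ | hw)
        · rintro ⟨x', hx', hxx⟩
          have := hi (hsub hx') (ball_subset_closedBall hx) hxx
          rw [this] at hx'
          rw [mem_ball] at hx; rw [mem_sphere] at hx'; linarith
        · exact hb hw
      · obtain ⟨x, hx, rfl⟩ := hcD
        refine ⟨x, ?_, rfl⟩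
        rw [mem_ball]
        refine lt_of_le_of_ne hx fun h => hc ⟨x, h, rfl⟩
    have h2 := hm.comp (hg.mono hsub) (Set.mapsTo_image g (sphere y r))
    refine (h2.mul (h1 c' hc'D)).congr fun z hz => ?_
    have : g z - c' ≠ 0 := fun h0 => hc'D ⟨z, hsub hz, sub_eq_zero.1 h0⟩
    field_simp
  have h3 : HasLog (fun z => rr l (g z)) (sphere y r) :=
    HasLog.rr_of l fun p hp => hfac p.1 (hl p hp)
  have h4 := hlog.comp (hg.mono hsub) (Set.mapsTo_image g (sphere y r))
  refine no_log_circle y hr ((h4.mul h3.inv).congr fun z hz => ?_)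
  obtain ⟨u, _, hu⟩ := h3
  have h5 : rr l (g z) ≠ 0 := by
    have := hu z hz
    simp only at this
    rw [this]; exact Complex.exp_ne_zero _
  rw [hqg z hz]
  field_simp

theorem invDomain {V : Set ℂ} (hV : IsOpen V) {g : ℂ → ℂ} (hg : ContinuousOn g V)
    (hi : Set.InjOn g V) : IsOpen (g '' V) := by
  rw [isOpen_iff_mem_nhds]
  rintro _ ⟨y, hy, rfl⟩
  obtain ⟨r, hr, hb⟩ := Metric.nhds_basis_closedBall.mem_iff.1 (hV.mem_nhds hy)
  have := invDomain_pt hr (hg.mono hb) (hi.mono hb)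
  exact Filter.mem_of_superset (mem_interior_iff_mem_nhds.1 this) (Set.image_mono hb)

theorem invDomainM {M : Type*} [TopologicalSpace M]
    (hsurf : ∀ x : M, ∃ U : Set M, IsOpen U ∧ x ∈ U ∧ Nonempty (U ≃ₜ (ℝ × ℝ)))
    {V : Set ℂ} (hV : IsOpen V) {g : ℂ → M} (hg : ContinuousOn g V)
    (hi : Set.InjOn g V) : IsOpen (g '' V) := by
  classical
  rw [isOpen_iff_mem_nhds]
  rintro _ ⟨y, hy, rfl⟩
  obtain ⟨U, hU, hyU, ⟨e⟩⟩ := hsurf (g y)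
  set e' : U ≃ₜ ℂ := e.trans Complex.equivRealProdCLM.symm.toHomeomorph with he'
  set V' := V ∩ g ⁻¹' U with hV'
  have hV'o : IsOpen V' := hg.isOpen_inter_preimage hV hU
  have hVU : ∀ z ∈ V', g z ∈ U := fun z hz => hz.2
  set G : ℂ → ℂ := fun z => if h : g z ∈ U then e' ⟨g z, h⟩ else 0 with hG
  have hGc : ContinuousOn G V' := by
    rw [continuousOn_iff_continuous_domRestrict]
    have : Set.domRestrict V' G = fun z : V' => e' ⟨g z.1, hVU z.1 z.2⟩ := by
      ext z
      simp only [Set.domRestrict_apply, hG]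
      rw [dif_pos (hVU z.1 z.2)]
    rw [this]
    refine e'.continuous.comp (Continuous.subtype_mk ?_ _)
    exact continuousOn_iff_continuous_domRestrict.1 (hg.mono Set.inter_subset_left)
  have hGi : Set.InjOn G V' := by
    intro a ha b hb hab
    simp only [hG] at hab
    rw [dif_pos (hVU a ha), dif_pos (hVU b hb)] at hab
    have := e'.injective hab
    exact hi ha.1 hb.1 (Subtype.ext_iff.1 this)
  have ho := invDomain hV'o hGc hGi
  have ho2 : IsOpen ((Subtype.val : U → M) '' (e' ⁻¹' (G '' V'))) :=
    hU.isOpenMap_subtype_val _ (ho.preimage e'.continuous)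
  have hsub : (Subtype.val : U → M) '' (e' ⁻¹' (G '' V')) ⊆ g '' V := by
    rintro _ ⟨w, ⟨z, hz, hzw⟩, rfl⟩
    refine ⟨z, hz.1, ?_⟩
    simp only [hG] at hzw
    rw [dif_pos (hVU z hz)] at hzw
    exact Subtype.ext_iff.1 (e'.injective hzw)
  refine Filter.mem_of_superset (ho2.mem_nhds ?_) hsub
  refine ⟨⟨g y, hyU⟩, ⟨y, ⟨hy, hyU⟩, ?_⟩, rfl⟩
  simp only [hG]
  rw [dif_pos hyU]

end AnnPf

namespace AnnPf

/-- round annulus -/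
def AA : Set ℂ := {z | 1 ≤ ‖z‖ ∧ ‖z‖ ≤ 2}

theorem AA_ne {z : ℂ} (h : z ∈ AA) : z ≠ 0 := by
  rintro rfl
  have := h.1
  simp at this
  linarith

structure AnnChart {M : Type*} [TopologicalSpace M] (A : Set M) (Φ : ℂ → M) (Ψ : M → ℂ) : Prop where
  mapsΦ : ∀ z ∈ AA, Φ z ∈ A
  mapsΨ : ∀ y ∈ A, Ψ y ∈ AA
  contΦ : ContinuousOn Φ AA
  contΨ : ContinuousOn Ψ A
  left : ∀ z ∈ AA, Ψ (Φ z) = z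
  right : ∀ y ∈ A, Φ (Ψ y) = y

theorem resc {E F : Type*} [NormedAddCommGroup E] [NormedSpace ℝ E] [NormedAddCommGroup F]
    [NormedSpace ℝ F] (T : E ≃L[ℝ] F) (z : E) (hz : z ≠ 0) :
    ‖(‖z‖ / ‖T z‖) • T z‖ = ‖z‖ ∧
    (‖(‖z‖ / ‖T z‖) • T z‖ / ‖T.symm ((‖z‖ / ‖T z‖) • T z)‖) • T.symm ((‖z‖ / ‖T z‖) • T z) = z := by
  have h1 : T z ≠ 0 := by simpa using hz
  have h1' : ‖T z‖ ≠ 0 := norm_ne_zero_iff.2 h1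
  have h2 : ‖z‖ ≠ 0 := norm_ne_zero_iff.2 hz
  have h3 : ‖(‖z‖ / ‖T z‖) • T z‖ = ‖z‖ := by
    rw [norm_smul, norm_div, norm_norm, norm_norm]; field_simp
  refine ⟨h3, ?_⟩
  rw [h3, map_smul, T.symm_apply_apply, norm_smul, norm_div, norm_norm, norm_norm, smul_smul]
  have : ‖z‖ / (‖z‖ / ‖T z‖ * ‖z‖) * (‖z‖ / ‖T z‖) = 1 := by field_simp
  rw [this, one_smul]

theorem resc_cont {E F : Type*} [NormedAddCommGroup E] [NormedSpace ℝ E] [NormedAddCommGroup F]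
    [NormedSpace ℝ F] (T : E ≃L[ℝ] F) {S : Set E} (hS : ∀ z ∈ S, z ≠ 0) :
    ContinuousOn (fun z => (‖z‖ / ‖T z‖) • T z) S := by
  have hT : ContinuousOn (fun z => T z) S := T.continuous.continuousOn
  refine ContinuousOn.smul (ContinuousOn.div continuous_norm.continuousOn hT.norm fun z hz => ?_) hT
  simpa using hS z hz

theorem mem_annulusModel {v : ℝ × ℝ} : v ∈ annulusModel ↔ 1 ≤ ‖v‖ ∧ ‖v‖ ≤ 2 := by
  simp only [annulusModel, Set.mem_diff, mem_closedBall, mem_ball, dist_zero_right, not_lt]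
  exact and_comm

theorem exists_chart {M : Type*} [TopologicalSpace M] {A : Set M} (hA : A.Nonempty)
    (h : Nonempty (A ≃ₜ annulusModel)) : ∃ Φ Ψ, AnnChart A Φ Ψ := by
  classical
  obtain ⟨e⟩ := h
  obtain ⟨x0, hx0⟩ := hA
  set T := Complex.equivRealProdCLM with hT
  have hm : ∀ z ∈ AA, (‖z‖ / ‖T z‖) • T z ∈ annulusModel := fun z hz => by
    rw [mem_annulusModel, (resc T z (AA_ne hz)).1]; exact hz
  have hne : ∀ v ∈ annulusModel, v ≠ 0 := fun v hv h0 => by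
    rw [mem_annulusModel, h0] at hv; simp at hv; linarith
  have hm' : ∀ v ∈ annulusModel, (‖v‖ / ‖T.symm v‖) • T.symm v ∈ AA := fun z hz => by
    have := (resc T.symm z (hne z hz)).1
    rw [AA, Set.mem_ofPred_eq, this]; exact mem_annulusModel.1 hz
  set Φ : ℂ → M := fun z => if h : (‖z‖ / ‖T z‖) • T z ∈ annulusModel then
    (e.symm ⟨_, h⟩).1 else x0 with hΦ
  set Ψ : M → ℂ := fun y => if h : y ∈ A then
    (‖(e ⟨y, h⟩).1‖ / ‖T.symm (e ⟨y, h⟩).1‖) • T.symm (e ⟨y, h⟩).1 else 0 with hΨ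
  have hΦe : ∀ z (hz : z ∈ AA), Φ z = (e.symm ⟨_, hm z hz⟩).1 := fun z hz => by
    simp only [hΦ]; rw [dif_pos (hm z hz)]
  have hΨe : ∀ y (hy : y ∈ A), Ψ y =
      (‖(e ⟨y, hy⟩).1‖ / ‖T.symm (e ⟨y, hy⟩).1‖) • T.symm (e ⟨y, hy⟩).1 := fun y hy => by
    simp only [hΨ]; rw [dif_pos hy]
  refine ⟨Φ, Ψ, ?_, ?_, ?_, ?_, ?_, ?_⟩
  · intro z hz; rw [hΦe z hz]; exact (e.symm _).2
  · intro y hy; rw [hΨe y hy]; exact hm' _ (e _).2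
  · rw [continuousOn_iff_continuous_domRestrict]
    have : Set.domRestrict AA Φ = fun z : AA => (e.symm ⟨_, hm z.1 z.2⟩).1 := by
      ext z; exact hΦe z.1 z.2
    rw [this]
    refine continuous_subtype_val.comp (e.symm.continuous.comp (Continuous.subtype_mk ?_ _))
    exact continuousOn_iff_continuous_domRestrict.1 (resc_cont T fun z hz => AA_ne hz)
  · rw [continuousOn_iff_continuous_domRestrict]
    have : Set.domRestrict A Ψ = (Set.domRestrict annulusModel
        fun v => (‖v‖ / ‖T.symm v‖) • T.symm v) ∘ e := by
      ext y; exact hΨe y.1 y.2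
    rw [this]
    exact (continuousOn_iff_continuous_domRestrict.1 (resc_cont T.symm hne)).comp e.continuous
  · intro z hz
    have h1 : Φ z ∈ A := by rw [hΦe z hz]; exact (e.symm _).2
    rw [hΨe _ h1]
    have : e ⟨Φ z, h1⟩ = ⟨_, hm z hz⟩ := by
      rw [← e.symm.injective.eq_iff, e.symm_apply_apply]
      exact Subtype.ext (hΦe z hz)
    rw [this]
    exact (resc T z (AA_ne hz)).2
  · intro y hy
    have h1 : Ψ y ∈ AA := by rw [hΨe y hy]; exact hm' _ (e _).2
    rw [hΦe _ h1]
    have : (⟨_, hm (Ψ y) h1⟩ : annulusModel) = e ⟨y, hy⟩ := by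
      refine Subtype.ext ?_
      simp only [hΨe y hy]
      exact (resc T.symm _ (hne _ (e ⟨y, hy⟩).2)).2
    rw [this, e.symm_apply_apply]

end AnnPf

namespace AnnPf
set_option linter.unusedSectionVars false

theorem extremal {F V : Set ℂ} {r : ℝ} (hF : IsCompact F) (hV : IsOpen V) (hVF : V ⊆ F)
    (h0 : ∀ z ∈ F, z ≠ 0) (hFV : ∀ z ∈ F, z ∉ V → ‖z‖ = r) (hVr : ∀ z ∈ V, ‖z‖ ≠ r)
    (hne : V.Nonempty) : False := by
  obtain ⟨z, hz⟩ := hne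
  have key : ∀ w ∈ V, ∀ᶠ t : ℝ in nhds 1, (t • w) ∈ V := fun w hw => by
    have : Filter.Tendsto (fun t : ℝ => t • w) (nhds 1) (nhds ((1:ℝ) • w)) :=
      (continuous_id.smul continuous_const).continuousAt
    rw [one_smul] at this
    exact this (hV.mem_nhds hw)
  rcases lt_or_gt_of_ne (hVr z hz) with h | h
  · obtain ⟨w, hw, hmin⟩ := hF.exists_isMinOn ⟨z, hVF hz⟩ continuous_norm.continuousOn
    have hwV : w ∈ V := by
      by_contra hc
      have h1 := hmin (hVF hz)
      have h2 := hFV w hw hc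
      simp only [Set.mem_ofPred_eq] at h1
      linarith
    have h1 := (key w hwV).filter_mono (nhdsWithin_le_nhds (s := Set.Iio 1))
    have h2 : ∀ᶠ t : ℝ in nhdsWithin 1 (Set.Iio 1), t ∈ Set.Ioo (0:ℝ) 1 :=
      Ioo_mem_nhdsLT one_pos
    obtain ⟨t, ht, ht'⟩ := (h1.and h2).exists
    have h3 := hmin (hVF ht)
    simp only [Set.mem_ofPred_eq, norm_smul, Real.norm_eq_abs, abs_of_pos ht'.1] at h3
    have h4 := norm_pos_iff.2 (h0 w hw)
    nlinarith [ht'.2]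
  · obtain ⟨w, hw, hmax⟩ := hF.exists_isMaxOn ⟨z, hVF hz⟩ continuous_norm.continuousOn
    have hwV : w ∈ V := by
      by_contra hc
      have h1 := hmax (hVF hz)
      have h2 := hFV w hw hc
      simp only [Set.mem_ofPred_eq] at h1
      linarith
    have h1 := (key w hwV).filter_mono (nhdsWithin_le_nhds (s := Set.Ioi 1))
    have h2 : ∀ᶠ t : ℝ in nhdsWithin 1 (Set.Ioi 1), t ∈ Set.Ioo (1:ℝ) 2 :=
      Ioo_mem_nhdsGT one_lt_two
    obtain ⟨t, ht, ht'⟩ := (h1.and h2).exists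
    have h3 := hmax (hVF ht)
    have ht0 : 0 < t := one_pos.trans ht'.1
    simp only [Set.mem_ofPred_eq, norm_smul, Real.norm_eq_abs, abs_of_pos ht0] at h3
    have h4 := norm_pos_iff.2 (h0 w hw)
    nlinarith [ht'.1]

theorem isClosed_AA : IsClosed AA :=
  (isClosed_le continuous_const continuous_norm).inter (isClosed_le continuous_norm continuous_const)

theorem isCompact_AA : IsCompact AA := by
  refine (isCompact_closedBall (0:ℂ) 2).of_isClosed_subset isClosed_AA fun z hz => ?_
  simpa using hz.2

theorem comp_facts {K : Set ℂ} (hK : IsCompact K) {c : ℂ} (hc : c ∉ K)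
    (hb : connectedComponentIn Kᶜ c ⊆ AA) :
    IsOpen (connectedComponentIn Kᶜ c) ∧
    (∀ z ∈ closure (connectedComponentIn Kᶜ c), z ∉ connectedComponentIn Kᶜ c → z ∈ K) ∧
    (∃ z ∈ closure (connectedComponentIn Kᶜ c), z ∈ K) := by
  have ho : IsOpen (connectedComponentIn Kᶜ c) := hK.isClosed.isOpen_compl.connectedComponentIn
  have hcl : ∀ z ∈ closure (connectedComponentIn Kᶜ c), z ∉ connectedComponentIn Kᶜ c → z ∈ K := by
    intro z hz hzn
    by_contra hzK
    have ho' : IsOpen (connectedComponentIn Kᶜ z) := hK.isClosed.isOpen_compl.connectedComponentIn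
    obtain ⟨w, hw1, hw2⟩ := mem_closure_iff.1 hz _ ho' (mem_connectedComponentIn hzK)
    have h1 := connectedComponentIn_eq hw1
    have h2 := connectedComponentIn_eq hw2
    exact hzn (h2.symm ▸ h1 ▸ mem_connectedComponentIn hzK)
  refine ⟨ho, hcl, ?_⟩
  by_contra hcon
  push Not at hcon
  have hclosed : IsClosed (connectedComponentIn Kᶜ c) := by
    refine isClosed_of_closure_subset fun z hz => ?_
    by_contra h
    exact hcon z hz (hcl z hz h)
  have := IsClopen.eq_univ ⟨hclosed, ho⟩ ⟨c, mem_connectedComponentIn hc⟩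
  exact AA_ne (hb (this ▸ Set.mem_univ (0:ℂ))) rfl

theorem AnnChart.injΦ {M : Type*} [TopologicalSpace M] {A : Set M} {Φ : ℂ → M} {Ψ : M → ℂ}
    (h : AnnChart A Φ Ψ) : Set.InjOn Φ AA := fun a ha b hb hab => by
  rw [← h.left a ha, ← h.left b hb, hab]

theorem AnnChart.injΨ {M : Type*} [TopologicalSpace M] {A : Set M} {Φ : ℂ → M} {Ψ : M → ℂ}
    (h : AnnChart A Φ Ψ) : Set.InjOn Ψ A := fun a ha b hb hab => by
  rw [← h.right a ha, ← h.right b hb, hab]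

section
variable {M : Type*} [TopologicalSpace M] [T2Space M]

/-- circles of charts lie in the interior -/
theorem circle_interior
    (hsurf : ∀ x : M, ∃ U : Set M, IsOpen U ∧ x ∈ U ∧ Nonempty (U ≃ₜ (ℝ × ℝ)))
    {A L : Set M} {Φ : ℂ → M} {Ψ : M → ℂ} (h : AnnChart A Φ Ψ) (hAL : A ⊆ L) {z : ℂ}
    (hz : ‖z‖ = 3 / 2) : Φ z ∈ interior L := by
  set V : Set ℂ := {w | 1 < ‖w‖} ∩ {w | ‖w‖ < 2}
  have hV : IsOpen V := (isOpen_lt continuous_const continuous_norm).inter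
    (isOpen_lt continuous_norm continuous_const)
  have hVA : V ⊆ AA := fun w hw => ⟨hw.1.le, hw.2.le⟩
  have ho := invDomainM hsurf hV (h.contΦ.mono hVA) (h.injΦ.mono hVA)
  refine interior_maximal ?_ ho ⟨z, ⟨?_, ?_⟩, rfl⟩
  · rintro _ ⟨w, hw, rfl⟩
    exact hAL (h.mapsΦ w (hVA hw))
  · simp only [Set.mem_ofPred_eq, hz]; norm_num
  · simp only [Set.mem_ofPred_eq, hz]; norm_num

theorem no_filled
    (hsurf : ∀ x : M, ∃ U : Set M, IsOpen U ∧ x ∈ U ∧ Nonempty (U ≃ₜ (ℝ × ℝ)))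
    {L U A₁ J : Set M} {Φ₁ : ℂ → M} {Ψ₁ : M → ℂ}
    (hL : ∀ x ∈ (interior L)ᶜ, ¬ IsCompact (connectedComponentIn (interior L)ᶜ x))
    (hA₁ : AnnChart A₁ Φ₁ Ψ₁) (hA₁U : ∀ y ∈ A₁, y ∉ U) (hJ : IsCompact J) (hJA : J ⊆ A₁)
    (hJL : J ⊆ L)
    (hJc : ∀ y ∈ J, ∃ Φ Ψ, AnnChart (connectedComponentIn (L \ U) y) Φ Ψ ∧
      ∀ z ∈ connectedComponentIn (L \ U) y, z ∈ J ↔ ‖Ψ z‖ = 3 / 2)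
    {c : ℂ} (hc : c ∉ Ψ₁ '' J) (hb : connectedComponentIn (Ψ₁ '' J)ᶜ c ⊆ AA) : False := by
  have hK : IsCompact (Ψ₁ '' J) := hJ.image_of_continuousOn (hA₁.contΨ.mono hJA)
  obtain ⟨hVo, hcl, z₀, hz₀, hz₀K⟩ := comp_facts hK hc hb
  set V := connectedComponentIn (Ψ₁ '' J)ᶜ c with hVdef
  have hVK : ∀ z ∈ V, z ∉ Ψ₁ '' J := fun z hz => connectedComponentIn_subset _ _ hz
  have hcb : closure V ⊆ AA := closure_minimal hb isClosed_AA
  have hccomp : IsCompact (closure V) := isCompact_AA.of_isClosed_subset isClosed_closure hcb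
  have hPc : IsCompact (Φ₁ '' closure V) := hccomp.image_of_continuousOn (hA₁.contΦ.mono hcb)
  have hVconn : IsPreconnected V := isPreconnected_connectedComponentIn
  have hPconn : IsPreconnected (Φ₁ '' closure V) :=
    hVconn.closure.image _ (hA₁.contΦ.mono hcb)
  have hoM : IsOpen (Φ₁ '' V) := invDomainM hsurf hVo (hA₁.contΦ.mono hb) (hA₁.injΦ.mono hb)
  have hJO : J ⊆ interior L := fun y hy => by
    obtain ⟨Φ, Ψ, hch, hyJ⟩ := hJc y hy
    have hyC : y ∈ L \ U := ⟨hJL hy, hA₁U y (hJA hy)⟩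
    have hym := mem_connectedComponentIn hyC
    rw [← hch.right y hym]
    exact circle_interior hsurf hch
      ((connectedComponentIn_subset _ _).trans Set.sdiff_subset) ((hyJ y hym).1 hy)
  have hKJ : ∀ z ∈ Ψ₁ '' J, Φ₁ z ∈ J := by
    rintro _ ⟨y, hy, rfl⟩
    rwa [hA₁.right y (hJA hy)]
  by_cases hT : ∃ x ∈ Φ₁ '' V, x ∉ interior L
  · obtain ⟨x, hxV, hxO⟩ := hT
    refine hL x hxO ?_
    have hsub : connectedComponentIn (interior L)ᶜ x ⊆ Φ₁ '' V := by
      refine isPreconnected_connectedComponentIn.subset_left_of_subset_union hoM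
        hPc.isClosed.isOpen_compl ?_ ?_ ⟨x, mem_connectedComponentIn hxO, hxV⟩
      · rw [Set.disjoint_compl_right_iff_subset]
        exact Set.image_mono subset_closure
      · intro y hy
        by_cases hyP : y ∈ Φ₁ '' closure V
        · left
          obtain ⟨z, hz, rfl⟩ := hyP
          by_contra hn
          have hzK := hcl z hz fun h => hn ⟨z, h, rfl⟩
          exact connectedComponentIn_subset _ _ hy (hJO (hKJ z hzK))
        · right; exact hyP
    refine hPc.of_isClosed_subset ?_ (hsub.trans (Set.image_mono subset_closure))
    exact isClosed_of_closure_subset (isPreconnected_connectedComponentIn.closure.subset_connectedComponentIn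
      (subset_closure (mem_connectedComponentIn hxO))
      (closure_minimal (connectedComponentIn_subset _ _) isOpen_interior.isClosed_compl))
  · push Not at hT
    have hPL : Φ₁ '' closure V ⊆ L \ U := by
      rintro _ ⟨z, hz, rfl⟩
      refine ⟨interior_subset ?_, hA₁U _ (hA₁.mapsΦ z (hcb hz))⟩
      by_cases hzV : z ∈ V
      · exact hT _ ⟨z, hzV, rfl⟩
      · exact hJO (hKJ z (hcl z hz hzV))
    obtain ⟨Φ, Ψ, hch, hyJ⟩ := hJc (Φ₁ z₀) (hKJ z₀ hz₀K)
    have hPA : ∀ z ∈ closure V, Φ₁ z ∈ connectedComponentIn (L \ U) (Φ₁ z₀) := fun z hz =>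
      hPconn.subset_connectedComponentIn ⟨z₀, hz₀, rfl⟩ hPL ⟨z, hz, rfl⟩
    have hcont : ContinuousOn (fun z => Ψ (Φ₁ z)) (closure V) :=
      hch.contΨ.comp (hA₁.contΦ.mono hcb) hPA
    have hinj : Set.InjOn (fun z => Ψ (Φ₁ z)) (closure V) := fun a ha b hb' hab =>
      hA₁.injΦ (hcb ha) (hcb hb') (hch.injΨ (hPA a ha) (hPA b hb') hab)
    refine extremal (r := 3 / 2) (hccomp.image_of_continuousOn hcont)
      (invDomain hVo (hcont.mono subset_closure) (hinj.mono subset_closure))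
      (Set.image_mono subset_closure) ?_ ?_ ?_ ⟨_, ⟨c, mem_connectedComponentIn hc, rfl⟩⟩
    · rintro _ ⟨z, hz, rfl⟩
      exact AA_ne (hch.mapsΨ _ (hPA z hz))
    · rintro _ ⟨z, hz, rfl⟩ hn
      have hzK := hcl z hz fun h => hn ⟨z, h, rfl⟩
      exact (hyJ _ (hPA z hz)).1 (hKJ z hzK)
    · rintro _ ⟨z, hz, rfl⟩ hr
      have := (hyJ _ (hPA z (subset_closure hz))).2 hr
      refine hVK z hz ⟨_, this, hA₁.left z (hb hz)⟩

theorem lemmaS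
    (hsurf : ∀ x : M, ∃ U : Set M, IsOpen U ∧ x ∈ U ∧ Nonempty (U ≃ₜ (ℝ × ℝ)))
    {L U A₁ J : Set M} {Φ₁ : ℂ → M} {Ψ₁ : M → ℂ}
    (hL : ∀ x ∈ (interior L)ᶜ, ¬ IsCompact (connectedComponentIn (interior L)ᶜ x))
    (hA₁ : AnnChart A₁ Φ₁ Ψ₁) (hA₁U : ∀ y ∈ A₁, y ∉ U) (hJ : IsCompact J) (hJA : J ⊆ A₁)
    (hJL : J ⊆ L)
    (hJc : ∀ y ∈ J, ∃ Φ Ψ, AnnChart (connectedComponentIn (L \ U) y) Φ Ψ ∧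
      ∀ z ∈ connectedComponentIn (L \ U) y, z ∈ J ↔ ‖Ψ z‖ = 3 / 2)
    {f : M → ℂ} (hf : ContinuousOn f J) (hf0 : ∀ y ∈ J, f y ≠ 0) :
    ∃ k : ℤ, HasLog (fun y => f y * Ψ₁ y ^ k) J := by
  have hK : IsCompact (Ψ₁ '' J) := hJ.image_of_continuousOn (hA₁.contΨ.mono hJA)
  have hKA : Ψ₁ '' J ⊆ AA := by rintro _ ⟨y, hy, rfl⟩; exact hA₁.mapsΨ y (hJA hy)
  have hKJ : ∀ z ∈ Ψ₁ '' J, Φ₁ z ∈ J := by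
    rintro _ ⟨y, hy, rfl⟩
    rwa [hA₁.right y (hJA hy)]
  obtain ⟨l, hl, hlog⟩ := eilenberg hK (f := fun z => f (Φ₁ z))
    (hf.comp (hA₁.contΦ.mono hKA) hKJ) (fun z hz => hf0 _ (hKJ z hz))
  have hfac : ∀ c, c ∉ Ψ₁ '' J → ∃ k : ℤ, HasLog (fun z : ℂ => (z - c) * z ^ k) (Ψ₁ '' J) := by
    intro c hc
    have hnf : ¬ connectedComponentIn (Ψ₁ '' J)ᶜ c ⊆ AA := fun h =>
      no_filled hsurf hL hA₁ hA₁U hJ hJA hJL hJc hc h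
    obtain ⟨c', hc', hn⟩ := Set.not_subset.1 hnf
    have hm := move hK isPreconnected_connectedComponentIn (connectedComponentIn_subset _ _)
      hc' (mem_connectedComponentIn (F := (Ψ₁ '' J)ᶜ) hc)
    have hc'K : c' ∉ Ψ₁ '' J := connectedComponentIn_subset _ _ hc'
    have hzc : ∀ z ∈ Ψ₁ '' J, z - c' ≠ 0 := fun z hz h => hc'K (sub_eq_zero.1 h ▸ hz)
    by_cases h2 : 2 < ‖c'‖
    · refine ⟨0, ?_⟩
      have hc0 : c' ≠ 0 := by rintro rfl; simp at h2; linarith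
      have h1 : HasLog (fun z : ℂ => 1 - z / c') (Ψ₁ '' J) := by
        refine HasLog.of_near (by fun_prop) fun z hz => ?_
        have : ‖1 - z / c' - 1‖ = ‖z‖ / ‖c'‖ := by
          rw [sub_right_comm, sub_self, zero_sub, norm_neg, norm_div]
        rw [this, div_lt_one (by linarith)]
        exact (hKA hz).2.trans_lt h2
      refine ((hm.mul h1).mul (HasLog.const (c := -c') (neg_ne_zero.2 hc0))).congr fun z hz => ?_
      have := hzc z hz
      simp only [zpow_zero, mul_one]
      field_simp
      ring
    · have h1 : ‖c'‖ < 1 := by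
        by_contra h; exact hn ⟨not_lt.1 h, not_lt.1 h2⟩
      refine ⟨-1, ?_⟩
      have hl1 : HasLog (fun z : ℂ => 1 - c' / z) (Ψ₁ '' J) := by
        refine HasLog.of_near ?_ fun z hz => ?_
        · exact continuousOn_const.sub
            (continuousOn_const.div continuousOn_id fun z hz => AA_ne (hKA hz))
        · have : ‖1 - c' / z - 1‖ = ‖c'‖ / ‖z‖ := by
            rw [sub_right_comm, sub_self, zero_sub, norm_neg, norm_div]
          have h3 := (hKA hz).1
          rw [this, div_lt_one (by linarith)]
          linarith
      refine (hm.mul hl1).congr fun z hz => ?_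
      have := hzc z hz
      have h0 := AA_ne (hKA hz)
      simp only [zpow_neg, zpow_one]
      field_simp
  have hlist : ∀ l : List (ℂ × ℤ), (∀ p ∈ l, p.1 ∉ Ψ₁ '' J) →
      ∃ k : ℤ, HasLog (fun z : ℂ => rr l z * z ^ k) (Ψ₁ '' J) := by
    intro l
    induction l with
    | nil =>
      intro _
      exact ⟨0, (HasLog.const one_ne_zero).congr fun z _ => by simp [rr]⟩
    | cons p l ih =>
      intro h
      obtain ⟨k, hk⟩ := ih fun q hq => h q (List.mem_cons_of_mem _ hq)
      obtain ⟨k', hk'⟩ := hfac p.1 (h p List.mem_cons_self)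
      refine ⟨k + k' * p.2, (hk.mul (hk'.zpow p.2)).congr fun z hz => ?_⟩
      have h0 := AA_ne (hKA hz)
      rw [rr_cons, zpow_add₀ h0, mul_zpow, zpow_mul]
      ring
  obtain ⟨k, hk⟩ := hlist l hl
  refine ⟨-k, ?_⟩
  have h1 := (hlog.mul hk.inv).comp (hA₁.contΨ.mono hJA) (Set.mapsTo_image Ψ₁ J)
  obtain ⟨u, _, hu⟩ := hk
  refine h1.congr fun y hy => ?_
  have hy' : Ψ₁ y ∈ Ψ₁ '' J := ⟨y, hy, rfl⟩
  have h2 : rr l (Ψ₁ y) ≠ 0 := by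
    have := hu _ hy'
    intro h0
    simp only [h0, zero_mul] at this
    exact Complex.exp_ne_zero _ this.symm
  have h3 := AA_ne (hKA hy')
  rw [hA₁.right y (hJA hy), zpow_neg]
  field_simp

end
end AnnPf

namespace AnnPf
set_option linter.unusedSectionVars false
open unitInterval

section
variable {M : Type*} [TopologicalSpace M] [T2Space M]

/-- log variation -/
def LV (Ψ : M → ℂ) {a b : M} (p : Path a b) (v : ℂ) : Prop :=
  ∃ u : I → ℂ, Continuous u ∧ (∀ t, Ψ (p t) = Complex.exp (u t)) ∧ u 1 - u 0 = v

theorem LV.exists {A : Set M} {Φ : ℂ → M} {Ψ : M → ℂ} (h : AnnChart A Φ Ψ) {a b : M}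
    (p : Path a b) (hp : ∀ t, p t ∈ A) : ∃ v, LV Ψ p v := by
  set f : ℂ → ℂ := fun z => Ψ (p (Set.projIcc 0 1 zero_le_one z.re)) with hf
  have hfc : Continuous f := by
    have h1 : Continuous fun z : ℂ => p (Set.projIcc 0 1 zero_le_one z.re) :=
      p.continuous.comp (continuous_projIcc.comp Complex.continuous_re)
    exact h.contΨ.comp_continuous h1 fun z => hp _
  obtain ⟨u, hu, hfu⟩ := hasLog_ball 0 (r := 1) hfc.continuousOn
    (fun z _ => AA_ne (h.mapsΨ _ (hp _)))
  have hm : ∀ t : I, ((t : ℝ) : ℂ) ∈ closedBall (0:ℂ) 1 := fun t => by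
    simp [abs_of_nonneg t.2.1, t.2.2]
  refine ⟨_, fun t => u ((t : ℝ) : ℂ), ?_, ?_, rfl⟩
  · exact hu.comp_continuous (by fun_prop) hm
  · intro t
    have := hfu _ (hm t)
    simp only [hf, Complex.ofReal_re] at this
    rw [← this, Set.projIcc_val]

theorem LV.trans {Ψ : M → ℂ} {a b c : M} {p : Path a b} {q : Path b c} {v w : ℂ}
    (hp : LV Ψ p v) (hq : LV Ψ q w) : LV Ψ (p.trans q) (v + w) := by
  obtain ⟨u, hu, hu', rfl⟩ := hp
  obtain ⟨u₂, hu₂, hu₂', rfl⟩ := hq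
  set P : Path (u 0) (u 1) := ⟨⟨u, hu⟩, rfl, rfl⟩ with hP
  set Q : Path (u 1) (u₂ 1 - u₂ 0 + u 1) := ⟨⟨fun t => u₂ t - u₂ 0 + u 1, by fun_prop⟩, by simp, rfl⟩ with hQ
  have hPt : ∀ t, P t = u t := fun _ => rfl
  have hQt : ∀ t, Q t = u₂ t - u₂ 0 + u 1 := fun _ => rfl
  have hexp : Complex.exp (u₂ 0) = Complex.exp (u 1) := by
    rw [← hu', ← hu₂', p.target, q.source]
  refine ⟨P.trans Q, (P.trans Q).continuous, ?_, ?_⟩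
  · intro t
    rw [Path.trans_apply, Path.trans_apply]
    split_ifs with h
    · rw [hu', hPt]
    · rw [hu₂', hQt, sub_add, Complex.exp_sub, Complex.exp_sub, hexp, div_self (Complex.exp_ne_zero _),
        div_one]
  · simp; ring

theorem exp_mem_AA {w : ℂ} : Complex.exp w ∈ AA ↔ 0 ≤ w.re ∧ w.re ≤ Real.log 2 := by
  rw [AA, Set.mem_ofPred_eq, Complex.norm_exp, Real.one_le_exp_iff, Real.le_log_iff_exp_le two_pos]

theorem exp_comb_mem_AA {w w' : ℂ} (h : Complex.exp w ∈ AA) (h' : Complex.exp w' ∈ AA) (s : I) :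
    Complex.exp ((1 - (s:ℝ) : ℂ) * w + (s : ℝ) * w') ∈ AA := by
  rw [exp_mem_AA] at *
  have h1 := s.2.1
  have h2 := s.2.2
  have : ((1 - (s:ℝ) : ℂ) * w + (s : ℝ) * w').re = (1 - (s:ℝ)) * w.re + s * w'.re := by simp
  rw [this]
  constructor
  · have := mul_nonneg (sub_nonneg.2 h2) h.1
    have := mul_nonneg h1 h'.1
    linarith
  · nlinarith [mul_le_mul_of_nonneg_left h.2 (sub_nonneg.2 h2), mul_le_mul_of_nonneg_left h'.2 h1]

theorem LV.homotopic {A : Set M} {Φ : ℂ → M} {Ψ : M → ℂ} (h : AnnChart A Φ Ψ) {a b : M}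
    {p q : Path a b} (hp : ∀ t, p t ∈ A) (hq : ∀ t, q t ∈ A) {v : ℂ} (hpv : LV Ψ p v)
    (hqv : LV Ψ q v) : p.Homotopic q := by
  obtain ⟨u, hu, hu', rfl⟩ := hpv
  obtain ⟨u₂, hu₂, hu₂', he⟩ := hqv
  have hexp : Complex.exp (u₂ 0) = Complex.exp (u 0) := by
    rw [← hu', ← hu₂', p.source, q.source]
  set w : I → ℂ := fun t => u₂ t - (u₂ 0 - u 0) with hw
  have hwc : Continuous w := by fun_prop
  have hw' : ∀ t, Ψ (q t) = Complex.exp (w t) := fun t => by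
    rw [hu₂', hw]
    simp only
    rw [Complex.exp_sub, Complex.exp_sub, hexp, div_self (Complex.exp_ne_zero _), div_one]
  have hw0 : w 0 = u 0 := by simp [hw]
  have hw1 : w 1 = u 1 := by simp only [hw]; linear_combination he
  have hm : ∀ x : I × I, Complex.exp ((1 - (x.1:ℝ) : ℂ) * u x.2 + (x.1 : ℝ) * w x.2) ∈ AA := fun x =>
    exp_comb_mem_AA (hu' x.2 ▸ h.mapsΨ _ (hp _)) (hw' x.2 ▸ h.mapsΨ _ (hq _)) x.1
  refine ⟨⟨⟨⟨fun x => Φ (Complex.exp ((1 - (x.1:ℝ) : ℂ) * u x.2 + (x.1 : ℝ) * w x.2)), ?_⟩, ?_, ?_⟩, ?_⟩⟩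
  · refine h.contΦ.comp_continuous ?_ hm
    fun_prop
  · intro t
    simp [← hu', h.right _ (hp t)]
  · intro t
    simp [← hw', h.right _ (hq t)]
  · intro s t ht
    rcases ht with rfl | rfl
    · simp only [ContinuousMap.coe_mk, hw0, Path.coe_toContinuousMap]
      rw [← add_mul, sub_add_cancel, one_mul, ← hu', h.right _ (hp _)]
    · simp only [ContinuousMap.coe_mk, hw1, Path.coe_toContinuousMap]
      rw [← add_mul, sub_add_cancel, one_mul, ← hu', h.right _ (hp _)]

theorem joinA {A : Set M} {Φ : ℂ → M} {Ψ : M → ℂ} (h : AnnChart A Φ Ψ) {a b : M}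
    (ha : a ∈ A) (hb : b ∈ A) : ∃ p : Path a b, ∀ t, p t ∈ A := by
  have hla := Complex.exp_log (AA_ne (h.mapsΨ a ha))
  have hlb := Complex.exp_log (AA_ne (h.mapsΨ b hb))
  have hm : ∀ s : I, Complex.exp ((1 - (s:ℝ) : ℂ) * Complex.log (Ψ a) + (s : ℝ) * Complex.log (Ψ b)) ∈ AA :=
    fun s => exp_comb_mem_AA (hla.symm ▸ h.mapsΨ a ha) (hlb.symm ▸ h.mapsΨ b hb) s
  refine ⟨⟨⟨fun s => Φ (Complex.exp ((1 - (s:ℝ) : ℂ) * Complex.log (Ψ a) + (s : ℝ) * Complex.log (Ψ b))), ?_⟩, ?_, ?_⟩, fun s => h.mapsΦ _ (hm s)⟩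
  · refine h.contΦ.comp_continuous ?_ hm
    fun_prop
  · simp [hla, h.right _ ha]
  · simp [hlb, h.right _ hb]

theorem LV.sub {Ψ : M → ℂ} {a b : M} {p q : Path a b} {v w : ℂ}
    (hp : LV Ψ p v) (hq : LV Ψ q w) : ∃ e : ℤ, v - w = e * (2 * Real.pi * Complex.I) := by
  obtain ⟨u, hu, hu', rfl⟩ := hp
  obtain ⟨u₂, hu₂, hu₂', rfl⟩ := hq
  rw [← Complex.exp_eq_one_iff, Complex.exp_sub, Complex.exp_sub, Complex.exp_sub, ← hu', ← hu',
    ← hu₂', ← hu₂', p.source, p.target, q.source, q.target]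
  refine div_self ?_
  have h1 := Complex.exp_ne_zero (u₂ 0)
  have h2 := Complex.exp_ne_zero (u₂ 1)
  rw [← hu₂'] at h1 h2
  rw [q.source] at h1
  rw [q.target] at h2
  exact div_ne_zero h2 h1

theorem circ_norm (x : ℝ) : ‖(3 / 2 : ℂ) * Complex.exp (x * Complex.I)‖ = 3 / 2 := by
  rw [norm_mul, Complex.norm_exp_ofReal_mul_I]; norm_num

theorem circ_mem (x : ℝ) : (3 / 2 : ℂ) * Complex.exp (x * Complex.I) ∈ AA := by
  rw [AA, Set.mem_ofPred_eq, circ_norm]; norm_num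

noncomputable def circP {A : Set M} {Φ : ℂ → M} {Ψ : M → ℂ} (h : AnnChart A Φ Ψ) (N : ℤ) :
    Path (Φ (3 / 2)) (Φ (3 / 2)) where
  toFun t := Φ ((3 / 2 : ℂ) * Complex.exp ((2 * Real.pi * N * t : ℝ) * Complex.I))
  continuous_toFun := by
    refine h.contΦ.comp_continuous ?_ fun t => circ_mem _
    fun_prop
  source' := by simp
  target' := by
    have : Complex.exp ((2 * Real.pi * N * (1 : I) : ℝ) * Complex.I) = 1 := by
      rw [Complex.exp_eq_one_iff]
      exact ⟨N, by push_cast; simp; ring⟩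
    rw [this, mul_one]

theorem circP_apply {A : Set M} {Φ : ℂ → M} {Ψ : M → ℂ} (h : AnnChart A Φ Ψ) (N : ℤ) (t : I) :
    circP h N t = Φ ((3 / 2 : ℂ) * Complex.exp ((2 * Real.pi * N * t : ℝ) * Complex.I)) := rfl

/-- the core circle -/
def circS (A : Set M) (Ψ : M → ℂ) : Set M := {y ∈ A | ‖Ψ y‖ = 3 / 2}

theorem circS_compact {A : Set M} {Φ : ℂ → M} {Ψ : M → ℂ} (h : AnnChart A Φ Ψ) :
    IsCompact (circS A Ψ) := by
  have hs : sphere (0:ℂ) (3 / 2) ⊆ AA := fun z hz => by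
    have : ‖z‖ = 3 / 2 := by simpa using hz
    rw [AA, Set.mem_ofPred_eq, this]; norm_num
  have : circS A Ψ = Φ '' sphere (0:ℂ) (3 / 2) := by
    ext y
    constructor
    · rintro ⟨hy, hn⟩
      exact ⟨Ψ y, by simpa using hn, h.right y hy⟩
    · rintro ⟨z, hz, rfl⟩
      refine ⟨h.mapsΦ z (hs hz), ?_⟩
      rw [h.left z (hs hz)]
      simpa using hz
  rw [this]
  exact (isCompact_sphere _ _).image_of_continuousOn (h.contΦ.mono hs)

theorem circP_mem {A : Set M} {Φ : ℂ → M} {Ψ : M → ℂ} (h : AnnChart A Φ Ψ) (N : ℤ) (t : I) :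
    circP h N t ∈ circS A Ψ := by
  rw [circP_apply]
  refine ⟨h.mapsΦ _ (circ_mem _), ?_⟩
  rw [h.left _ (circ_mem _), circ_norm]

theorem degree {A : Set M} {Φ : ℂ → M} {Ψ : M → ℂ} (h : AnnChart A Φ Ψ) {Ψ₁ : M → ℂ}
    {J : Set M} (hJ : circS A Ψ ⊆ J) {f : M → ℂ} {k ε : ℤ}
    (hlog : HasLog (fun y => f y * Ψ₁ y ^ k) J) (hf : ∀ y ∈ circS A Ψ, f y = Ψ y ^ ε) (N : ℤ)
    {v : ℂ} (hv : LV Ψ₁ (circP h N) v) : k * v = - (ε * N * (2 * Real.pi * Complex.I)) := by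
  obtain ⟨u, hu, hu', rfl⟩ := hv
  obtain ⟨g, hg, hg'⟩ := hlog
  have key := const_of_exp_one (S := (Set.univ : Set I)) isPreconnected_univ
    (φ := fun t => ε * (Complex.log (3 / 2) + (2 * Real.pi * N * t : ℝ) * Complex.I) + k * u t
      - g (circP h N t)) ?_ ?_ (Set.mem_univ 0) (Set.mem_univ 1)
  · have h01 : circP h N 0 = circP h N 1 := by rw [Path.source, Path.target]
    simp only [h01] at key
    push_cast at key
    simp at key
    linear_combination -key
  · refine Continuous.continuousOn ?_
    have : Continuous fun t => g (circP h N t) :=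
      hg.comp_continuous (circP h N).continuous fun t => hJ (circP_mem h N t)
    refine Continuous.sub ?_ this
    fun_prop
  · intro t _
    have h1 := hg' _ (hJ (circP_mem h N t))
    simp only at h1
    rw [Complex.exp_sub, Complex.exp_add, ← h1, Complex.exp_int_mul, Complex.exp_int_mul,
      Complex.exp_add, Complex.exp_log (by norm_num), ← hu', hf _ (circP_mem h N t)]
    have h2 : Ψ (circP h N t) = 3 / 2 * Complex.exp ((2 * Real.pi * N * t : ℝ) * Complex.I) := by
      rw [circP_apply, h.left _ (circ_mem _)]
    rw [← h2]
    refine div_self ?_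
    rw [← hf _ (circP_mem h N t)]
    rw [h1]
    exact Complex.exp_ne_zero _

end
end AnnPf

namespace AnnPf
set_option linter.unusedSectionVars false
open unitInterval

section
variable {M : Type*} [TopologicalSpace M] [T2Space M]

theorem excursion
    (hsurf : ∀ x : M, ∃ U : Set M, IsOpen U ∧ x ∈ U ∧ Nonempty (U ≃ₜ (ℝ × ℝ)))
    {L L' U : Set M} (hLL' : L ⊆ L')
    (hL : ∀ x ∈ (interior L)ᶜ, ¬ IsCompact (connectedComponentIn (interior L)ᶜ x))
    (hC : ∀ x ∈ L \ U, ∃ Φ Ψ, AnnChart (connectedComponentIn (L \ U) x) Φ Ψ)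
    (hC' : ∀ x ∈ L' \ U, ∃ Φ Ψ, AnnChart (connectedComponentIn (L' \ U) x) Φ Ψ)
    {a b : M} (ha : a ∈ L \ U) (hb : b ∈ L \ U) (τ : Path a b) (hτ : ∀ t, τ t ∈ L' \ U) :
    ∃ β : Path a b, (∀ t, β t ∈ L) ∧ τ.Homotopic β := by
  classical
  have hsub : L \ U ⊆ L' \ U := fun y hy => ⟨hLL' hy.1, hy.2⟩
  obtain ⟨Φ₁, Ψ₁, h₁⟩ := hC' a (hsub ha)
  set A₁ := connectedComponentIn (L' \ U) a with hA₁
  obtain ⟨Φa, Ψa, hca⟩ := hC a ha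
  obtain ⟨Φb, Ψb, hcb⟩ := hC b hb
  set Aa := connectedComponentIn (L \ U) a with hAa
  set Ab := connectedComponentIn (L \ U) b with hAb
  have hτA : ∀ t, τ t ∈ A₁ := fun t => by
    have h1 : IsPreconnected (Set.range τ) := isPreconnected_range τ.continuous
    exact h1.subset_connectedComponentIn ⟨0, τ.source⟩ (by rintro _ ⟨s, rfl⟩; exact hτ s) ⟨t, rfl⟩
  have hbA₁ : b ∈ A₁ := by have := hτA 1; rwa [τ.target] at this
  have hAaA : Aa ⊆ A₁ := connectedComponentIn_mono a hsub
  have hAbA : Ab ⊆ A₁ := by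
    have := connectedComponentIn_mono b hsub
    rwa [← connectedComponentIn_eq hbA₁] at this
  have hA₁U : ∀ y ∈ A₁, y ∉ U := fun y hy => (connectedComponentIn_subset _ _ hy).2
  have hAaL : Aa ⊆ L := (connectedComponentIn_subset _ _).trans Set.sdiff_subset
  have hAbL : Ab ⊆ L := (connectedComponentIn_subset _ _).trans Set.sdiff_subset
  have haA : a ∈ Aa := mem_connectedComponentIn ha
  have hbB : b ∈ Ab := mem_connectedComponentIn hb
  have hcirca : circS Aa Ψa ⊆ Aa := fun y hy => hy.1
  have hcircb : circS Ab Ψb ⊆ Ab := fun y hy => hy.1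
  -- single-circle consequence
  have single : ∀ {c : M} {Φ : ℂ → M} {Ψ : M → ℂ}
      (h : AnnChart (connectedComponentIn (L \ U) c) Φ Ψ), connectedComponentIn (L \ U) c ⊆ A₁ →
      ∃ k : ℤ, ∀ N : ℤ, ∀ v, LV Ψ₁ (circP h N) v → k * v = - (N * (2 * Real.pi * Complex.I)) := by
    intro c Φ Ψ h hcA
    have hcirc : circS (connectedComponentIn (L \ U) c) Ψ ⊆ connectedComponentIn (L \ U) c :=
      fun y hy => hy.1
    obtain ⟨k, hk⟩ := lemmaS hsurf hL h₁ hA₁U (circS_compact h) (hcirc.trans hcA)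
      (hcirc.trans ((connectedComponentIn_subset _ _).trans Set.sdiff_subset))
      (fun y hy => ⟨Φ, Ψ, by rw [← connectedComponentIn_eq (hcirc hy)]; exact h,
        fun z hz => by
          rw [← connectedComponentIn_eq (hcirc hy)] at hz
          exact ⟨fun h => h.2, fun h => ⟨hz, h⟩⟩⟩)
      (f := Ψ) (h.contΨ.mono hcirc) (fun y hy => AA_ne (h.mapsΨ y (hcirc hy)))
    refine ⟨k, fun N v hv => ?_⟩
    have := degree h subset_rfl hk (ε := 1) (fun y _ => by simp) N hv
    simpa using this
  have hpi : (2 * Real.pi * Complex.I : ℂ) ≠ 0 := Complex.two_pi_I_ne_zero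
  have hAB : Aa = Ab := by
    by_contra hne
    have hdisj : ∀ y, y ∈ Aa → y ∈ Ab → False := fun y h1 h2 =>
      hne ((connectedComponentIn_eq h1).trans (connectedComponentIn_eq h2).symm)
    set f : M → ℂ := fun y => if y ∈ Aa then Ψa y else 1 with hf
    have hfa : ∀ y ∈ circS Aa Ψa, f y = Ψa y := fun y hy => if_pos (hcirca hy)
    have hfb : ∀ y ∈ circS Ab Ψb, f y = 1 := fun y hy =>
      if_neg fun h => hdisj y h (hcircb hy)
    obtain ⟨k, hk⟩ := lemmaS hsurf hL h₁ hA₁U (J := circS Aa Ψa ∪ circS Ab Ψb)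
      ((circS_compact hca).union (circS_compact hcb))
      (Set.union_subset (hcirca.trans hAaA) (hcircb.trans hAbA))
      (Set.union_subset (hcirca.trans hAaL) (hcircb.trans hAbL))
      (by
        rintro y (hy | hy)
        · refine ⟨Φa, Ψa, by rw [← connectedComponentIn_eq (hcirca hy)]; exact hca, fun z hz => ?_⟩
          rw [← connectedComponentIn_eq (hcirca hy)] at hz
          refine ⟨?_, fun h => Or.inl ⟨hz, h⟩⟩
          rintro (h | h)
          · exact h.2
          · exact (hdisj z hz h.1).elim
        · refine ⟨Φb, Ψb, by rw [← connectedComponentIn_eq (hcircb hy)]; exact hcb, fun z hz => ?_⟩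
          rw [← connectedComponentIn_eq (hcircb hy)] at hz
          refine ⟨?_, fun h => Or.inr ⟨hz, h⟩⟩
          rintro (h | h)
          · exact (hdisj z h.1 hz).elim
          · exact h.2)
      (f := f)
      (ContinuousOn.union_of_isClosed ((hca.contΨ.mono hcirca).congr hfa)
        (continuousOn_const.congr hfb) (circS_compact hca).isClosed (circS_compact hcb).isClosed)
      (by
        rintro y (hy | hy)
        · rw [hfa y hy]; exact AA_ne (hca.mapsΨ y (hcirca hy))
        · rw [hfb y hy]; exact one_ne_zero)
    obtain ⟨va, hva⟩ := LV.exists h₁ (circP hca 1) fun t => hAaA (hcirca (circP_mem hca 1 t))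
    obtain ⟨vb, hvb⟩ := LV.exists h₁ (circP hcb 1) fun t => hAbA (hcircb (circP_mem hcb 1 t))
    have e1 := degree hca Set.subset_union_left hk (ε := 1) (fun y hy => by simp [hfa y hy]) 1 hva
    have e2 := degree hcb Set.subset_union_right hk (ε := 0) (fun y hy => by simp [hfb y hy]) 1 hvb
    obtain ⟨k', hk'⟩ := single hcb hAbA
    have e3 := hk' 1 vb hvb
    have hk0 : (k : ℂ) ≠ 0 := by
      intro h0; rw [h0] at e1; simp at e1
    have hvb0 : vb = 0 := by
      simpa [hk0] using e2
    rw [hvb0] at e3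
    simp at e3
  have hbA : b ∈ Aa := hAB ▸ hbB
  obtain ⟨k, hk⟩ := single hca hAaA
  have hm32 : (3 / 2 : ℂ) ∈ AA := by have := circ_mem 0; simpa using this
  have hc0 : Φa (3 / 2) ∈ Aa := hca.mapsΦ _ hm32
  obtain ⟨β₁, hβ₁⟩ := joinA hca haA hc0
  obtain ⟨β₂, hβ₂⟩ := joinA hca hc0 hbA
  obtain ⟨v, hv⟩ := LV.exists h₁ τ hτA
  obtain ⟨w₁, hw₁⟩ := LV.exists h₁ β₁ fun t => hAaA (hβ₁ t)
  obtain ⟨w₂, hw₂⟩ := LV.exists h₁ β₂ fun t => hAaA (hβ₂ t)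
  obtain ⟨e, he⟩ := hv.sub (hw₁.trans hw₂)
  have hcA : ∀ N t, circP hca N t ∈ Aa := fun N t => hcirca (circP_mem hca N t)
  obtain ⟨w, hw⟩ := LV.exists h₁ (circP hca (-k * e)) fun t => hAaA (hcA _ t)
  obtain ⟨w', hw'⟩ := LV.exists h₁ (circP hca 1) fun t => hAaA (hcA _ t)
  have hk0 : (k : ℂ) ≠ 0 := by
    intro h0; have := hk 1 w' hw'; rw [h0] at this; simp at this
  have hwe : w = e * (2 * Real.pi * Complex.I) := by
    have := hk _ w hw
    push_cast at this
    refine mul_left_cancel₀ hk0 ?_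
    linear_combination this
  set β := (β₁.trans (circP hca (-k * e))).trans β₂ with hβ
  have hβA : ∀ t, β t ∈ Aa := by
    have : Set.range β ⊆ Aa := by
      rw [hβ, Path.trans_range, Path.trans_range]
      refine Set.union_subset (Set.union_subset ?_ ?_) ?_
      · rintro _ ⟨t, rfl⟩; exact hβ₁ t
      · rintro _ ⟨t, rfl⟩; exact hcA _ t
      · rintro _ ⟨t, rfl⟩; exact hβ₂ t
    exact fun t => this ⟨t, rfl⟩
  have hβv : LV Ψ₁ β v := by
    have := (hw₁.trans hw).trans hw₂
    have hveq : v = w₁ + w + w₂ := by rw [hwe]; linear_combination he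
    rw [hveq]; exact this
  exact ⟨β, fun t => hAaL (hβA t), LV.homotopic h₁ hτA (fun t => hAaA (hβA t)) hv hβv⟩

end
end AnnPf

namespace AnnPf
set_option linter.unusedSectionVars false
open unitInterval

theorem I_induction (Q : I → Prop) (h0 : Q 0)
    (hstep : ∀ t₀ : I, ∃ N ∈ nhds t₀, ∀ y z, y ≤ z → Set.Icc y z ⊆ N → Q y → Q z) : Q 1 := by
  have := interval_induction (fun t => ∀ ht : t ∈ Set.Icc (0:ℝ) 1, Q ⟨t, ht⟩) 0 1 zero_le_one ?_ ?_
  · exact this ⟨zero_le_one, le_rfl⟩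
  · intro x hx
    obtain ⟨N, hN, hs⟩ := hstep ⟨x, hx⟩
    obtain ⟨ε, hε, hb⟩ := Metric.mem_nhds_iff.1 hN
    refine ⟨ε, hε, fun y z hy hyz hz hyI hzI hQ ht => ?_⟩
    refine hs ⟨y, hyI⟩ ⟨z, ht⟩ hyz (fun w hw => hb ?_) (hQ hyI)
    have h1 : y ≤ (w : ℝ) := hw.1
    have h2 : (w : ℝ) ≤ z := hw.2
    rw [mem_ball, Subtype.dist_eq, Real.dist_eq, abs_lt]
    constructor <;> simp only <;> linarith
  · intro _; exact h0

section
variable {M : Type*} [TopologicalSpace M] [T2Space M]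

theorem range_trans_mem {a b c : M} {p : Path a b} {q : Path b c} {S : Set M}
    (hp : ∀ t, p t ∈ S) (hq : ∀ t, q t ∈ S) : ∀ t, (p.trans q) t ∈ S := by
  have : Set.range (p.trans q) ⊆ S := by
    rw [Path.trans_range]
    rintro _ (⟨t, rfl⟩ | ⟨t, rfl⟩)
    · exact hp t
    · exact hq t
  exact fun t => this ⟨t, rfl⟩

theorem subpath_mem {a b : M} (γ : Path a b) {y z : I} (hyz : y ≤ z) {S : Set M}
    (h : ∀ t ∈ Set.Icc y z, γ t ∈ S) : ∀ t, γ.subpath y z t ∈ S := by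
  have : Set.range (γ.subpath y z) ⊆ S := by
    rw [Path.range_subpath_of_le _ _ _ hyz]
    rintro _ ⟨t, ht, rfl⟩; exact h t ht
  exact fun t => this ⟨t, rfl⟩

theorem push_into
    {L L' U K : Set M} (hK : IsClosed K) (hUK : U ⊆ K) (hKL : K ⊆ interior L)
    (hexc : ∀ {a b : M}, a ∈ L \ U → b ∈ L \ U → ∀ τ : Path a b, (∀ t, τ t ∈ L' \ U) →
      ∃ β : Path a b, (∀ t, β t ∈ L) ∧ τ.Homotopic β)
    {x y : M} (hx : x ∈ L) (hy : y ∈ L) (γ : Path x y) (hγ : ∀ t, γ t ∈ L') :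
    ∃ β : Path x y, (∀ t, β t ∈ L) ∧ γ.Homotopic β := by
  set Q1 : I → Prop := fun t => ∃ l : Path (γ 0) (γ t), (∀ s, l s ∈ L) ∧
    (γ.subpath 0 t).Homotopic l with hQ1
  set Q2 : I → Prop := fun t => ∃ a ∈ L \ U, ∃ l : Path (γ 0) a, (∀ s, l s ∈ L) ∧
    ∃ τ : Path a (γ t), (∀ s, τ s ∈ L' \ U) ∧ (γ.subpath 0 t).Homotopic (l.trans τ) with hQ2
  have h21 : ∀ t, γ t ∈ L → Q1 t ∨ Q2 t → Q1 t := by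
    rintro t ht (h | ⟨a, ha, l, hl, τ, hτ, hh⟩)
    · exact h
    · have htU : γ t ∉ U := by have := (hτ 1).2; rwa [τ.target] at this
      obtain ⟨β, hβ, hτβ⟩ := hexc ha ⟨ht, htU⟩ τ hτ
      exact ⟨l.trans β, range_trans_mem hl hβ, hh.trans ((Path.Homotopic.refl l).hcomp hτβ)⟩
  have h12 : ∀ t, γ t ∉ U → Q1 t ∨ Q2 t → Q2 t := by
    rintro t ht (⟨l, hl, hh⟩ | h)
    · have htL : γ t ∈ L := by have := hl 1; rwa [l.target] at this
      exact ⟨γ t, ⟨htL, ht⟩, l, hl, Path.refl _, fun _ => ⟨hγ t, ht⟩,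
        hh.trans ⟨(Path.Homotopy.transRefl l).symm⟩⟩
    · exact h
  have main : Q1 1 ∨ Q2 1 := by
    refine I_induction (fun t => Q1 t ∨ Q2 t) (Or.inl ?_) ?_
    · exact ⟨Path.refl _, fun _ => by simpa using hx, by rw [Path.subpath_self]⟩
    · intro t₀
      by_cases ht : γ t₀ ∈ interior L
      · refine ⟨γ ⁻¹' interior L, (isOpen_interior.preimage γ.continuous).mem_nhds ht, ?_⟩
        intro y z hyz hN hQ
        obtain ⟨l, hl, hh⟩ := h21 y (interior_subset (hN ⟨le_rfl, hyz⟩)) hQ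
        left
        refine ⟨l.trans (γ.subpath y z), range_trans_mem hl (subpath_mem γ hyz fun t ht =>
          interior_subset (hN ht)), ?_⟩
        exact Path.Homotopic.trans ⟨(Path.Homotopy.subpathTransSubpath γ 0 y z).symm⟩
          (hh.hcomp (Path.Homotopic.refl _))
      · refine ⟨γ ⁻¹' Kᶜ, (hK.isOpen_compl.preimage γ.continuous).mem_nhds fun h => ht (hKL h), ?_⟩
        intro y z hyz hN hQ
        have hNU : ∀ t ∈ Set.Icc y z, γ t ∉ U := fun t ht h => hN ht (hUK h)
        obtain ⟨a, ha, l, hl, τ, hτ, hh⟩ := h12 y (hNU y ⟨le_rfl, hyz⟩) hQ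
        right
        refine ⟨a, ha, l, hl, τ.trans (γ.subpath y z), range_trans_mem hτ
          (subpath_mem γ hyz fun t ht => ⟨hγ t, hNU t ht⟩), ?_⟩
        refine Path.Homotopic.trans ⟨(Path.Homotopy.subpathTransSubpath γ 0 y z).symm⟩ ?_
        refine (hh.hcomp (Path.Homotopic.refl _)).trans ?_
        exact ⟨Path.Homotopy.transAssoc _ _ _⟩
  obtain ⟨l, hl, hh⟩ := h21 1 (by simpa using hy) main
  rw [Path.subpath_zero_one] at hh
  refine ⟨l.cast γ.source.symm γ.target.symm, fun t => hl t, ?_⟩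
  obtain ⟨F⟩ := hh
  exact ⟨F.pathCast γ.source.symm γ.target.symm⟩

end
end AnnPf

namespace AnnPf
set_option linter.unusedSectionVars false
open unitInterval

section
variable {M : Type*} [TopologicalSpace M]

/-- paths in `S` with the same endpoints are homotopic in `M` -/
def Good (S : Set M) : Prop :=
  ∀ (a b : M) (p q : Path a b), (∀ t, p t ∈ S) → (∀ t, q t ∈ S) → p.Homotopic q

theorem Good.mono {S T : Set M} (h : Good T) (hST : S ⊆ T) : Good S :=
  fun a b p q hp hq => h a b p q (fun t => hST (hp t)) (fun t => hST (hq t))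

theorem good_chart {D : Set M} (e : D ≃ₜ (ℝ × ℝ)) : Good D := by
  intro a b p q hp hq
  set P : I → ℝ × ℝ := fun t => e ⟨p t, hp t⟩ with hP
  set Q : I → ℝ × ℝ := fun t => e ⟨q t, hq t⟩ with hQ
  have hPc : Continuous P := e.continuous.comp (Continuous.subtype_mk p.continuous _)
  have hQc : Continuous Q := e.continuous.comp (Continuous.subtype_mk q.continuous _)
  have h0 : Q 0 = P 0 := by simp [hP, hQ]
  have h1 : Q 1 = P 1 := by simp [hP, hQ]
  refine ⟨⟨⟨⟨fun x => (e.symm ((1 - (x.1 : ℝ)) • P x.2 + (x.1 : ℝ) • Q x.2)).1, ?_⟩, ?_, ?_⟩, ?_⟩⟩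
  · refine continuous_subtype_val.comp (e.symm.continuous.comp ?_)
    fun_prop
  · intro t; simp [hP]
  · intro t; simp [hQ]
  · intro s t ht
    rcases ht with rfl | rfl
    · simp only [ContinuousMap.coe_mk, h0, Path.coe_toContinuousMap]
      rw [← add_smul, sub_add_cancel, one_smul]; simp [hP]
    · simp only [ContinuousMap.coe_mk, h1, Path.coe_toContinuousMap]
      rw [← add_smul, sub_add_cancel, one_smul]; simp [hP]

theorem locPath (hsurf : ∀ x : M, ∃ U : Set M, IsOpen U ∧ x ∈ U ∧ Nonempty (U ≃ₜ (ℝ × ℝ))) :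
    LocallyPathConnectedSpace M := by
  rw [locallyPathConnectedSpace_iff_pathComponentIn_mem_nhds]
  intro x u hu hxu
  obtain ⟨D, hD, hxD, ⟨e⟩⟩ := hsurf x
  have hN : (fun v => ((e.symm v).1 : M)) ⁻¹' u ∈ nhds (e ⟨x, hxD⟩) := by
    refine (hu.preimage (continuous_subtype_val.comp e.symm.continuous)).mem_nhds ?_
    simpa using hxu
  obtain ⟨ε, hε, hb⟩ := Metric.mem_nhds_iff.1 hN
  have hpc : IsPathConnected ((fun v => ((e.symm v).1 : M)) '' ball (e ⟨x, hxD⟩) ε) :=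
    ((convex_ball _ _).isPathConnected ⟨_, mem_ball_self hε⟩).image
      (continuous_subtype_val.comp e.symm.continuous)
  have ho : IsOpen ((fun v => ((e.symm v).1 : M)) '' ball (e ⟨x, hxD⟩) ε) :=
    (hD.isOpenEmbedding_subtypeVal.comp e.symm.isOpenEmbedding).isOpenMap _ isOpen_ball
  have hx : x ∈ (fun v => ((e.symm v).1 : M)) '' ball (e ⟨x, hxD⟩) ε :=
    ⟨_, mem_ball_self hε, by simp⟩
  refine Filter.mem_of_superset (ho.mem_nhds hx) ?_
  exact hpc.subset_pathComponentIn hx (Set.image_subset_iff.2 hb)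

theorem wlc (hsurf : ∀ x : M, ∃ U : Set M, IsOpen U ∧ x ∈ U ∧ Nonempty (U ≃ₜ (ℝ × ℝ))) :
    WeaklyLocallyCompactSpace M := by
  refine ⟨fun x => ?_⟩
  obtain ⟨D, hD, hxD, ⟨e⟩⟩ := hsurf x
  refine ⟨(fun v => ((e.symm v).1 : M)) '' closedBall (e ⟨x, hxD⟩) 1,
    (isCompact_closedBall _ _).image (continuous_subtype_val.comp e.symm.continuous), ?_⟩
  have ho : IsOpen ((fun v => ((e.symm v).1 : M)) '' ball (e ⟨x, hxD⟩) 1) :=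
    (hD.isOpenEmbedding_subtypeVal.comp e.symm.isOpenEmbedding).isOpenMap _ isOpen_ball
  exact Filter.mem_of_superset (ho.mem_nhds ⟨_, mem_ball_self one_pos, by simp⟩)
    (Set.image_mono ball_subset_closedBall)

theorem good_cover [T2Space M] [SecondCountableTopology M]
    (hsurf : ∀ x : M, ∃ U : Set M, IsOpen U ∧ x ∈ U ∧ Nonempty (U ≃ₜ (ℝ × ℝ)))
    {L : Set M} (hL : IsCompact L) :
    ∃ (T : Finset M) (V : M → Set M), (∀ y, IsOpen (V y) ∧ IsPathConnected (V y) ∧ y ∈ V y) ∧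
      (∀ z ∈ L, ∃ y ∈ T, z ∈ V y) ∧
      ∀ y ∈ T, ∀ y' ∈ T, (V y ∩ V y').Nonempty → Good (V y ∪ V y') := by
  have := wlc hsurf
  have := locPath hsurf
  let _ : MetricSpace M := TopologicalSpace.metrizableSpaceMetric M
  choose D hD hxD he using hsurf
  obtain ⟨δ, hδ, hLeb⟩ := lebesgue_number_lemma_of_metric hL hD
    (fun x _ => Set.mem_iUnion.2 ⟨x, hxD x⟩)
  set V : M → Set M := fun y => pathComponentIn (ball y (δ / 4)) y with hV
  have hVy : ∀ y, y ∈ V y := fun y => mem_pathComponentIn_self (mem_ball_self (by positivity))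
  have hVo : ∀ y, IsOpen (V y) := fun y => isOpen_ball.pathComponentIn y
  have hVb : ∀ y, V y ⊆ ball y (δ / 4) := fun y => pathComponentIn_subset
  obtain ⟨T, hT, hcov⟩ := hL.elim_nhds_subcover V fun y _ => (hVo y).mem_nhds (hVy y)
  refine ⟨T, V, fun y => ⟨hVo y, isPathConnected_pathComponentIn (mem_ball_self (by positivity)), hVy y⟩,
    fun z hz => ?_, ?_⟩
  · obtain ⟨y, hy, hzy⟩ := Set.mem_iUnion₂.1 (hcov hz)
    exact ⟨y, hy, hzy⟩
  · rintro y hy y' hy' ⟨w, hw, hw'⟩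
    obtain ⟨i, hi⟩ := hLeb y (hT y hy)
    refine (good_chart (he i).some).mono (Set.union_subset ?_ ?_)
    · exact (hVb y).trans ((ball_subset_ball (by linarith)).trans hi)
    · intro z hz
      refine hi ?_
      have h1 := hVb y hw
      have h2 := hVb y' hw'
      have h3 := hVb y' hz
      rw [mem_ball] at *
      have h4 := dist_triangle z y' w
      have h5 := dist_triangle z w y
      rw [dist_comm y' w] at h4
      linarith

open Path.Homotopic.Quotient (mk) in
theorem fg_loops [T2Space M] [SecondCountableTopology M] [ConnectedSpace M]
    (hsurf : ∀ x : M, ∃ U : Set M, IsOpen U ∧ x ∈ U ∧ Nonempty (U ≃ₜ (ℝ × ℝ)))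
    {L : Set M} (hL : IsCompact L) (x : M) :
    ∃ S : Set (FundamentalGroup M x), S.Finite ∧ ∀ γ : Path x x, (∀ t, γ t ∈ L) →
      (mk γ : FundamentalGroup M x) ∈ Subgroup.closure S := by
  classical
  obtain ⟨T, V, hV, hcov, hgood⟩ := good_cover hsurf hL
  have := locPath hsurf
  have hpc : PathConnectedSpace M := pathConnectedSpace_iff_connectedSpace.2 inferInstance
  have hp : ∀ y : M, ∃ p : Path x y, True := fun y => ⟨PathConnectedSpace.somePath x y, trivial⟩
  choose p _ using hp
  have hgen : ∀ k l : M, ∃ g : FundamentalGroup M x, ∀ q : Path k l, k ∈ T → l ∈ T →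
      (V k ∩ V l).Nonempty → (∀ t, q t ∈ V k ∪ V l) →
      (mk ((p k).trans (q.trans (p l).symm)) : FundamentalGroup M x) = g := by
    intro k l
    by_cases h : ∃ q : Path k l, k ∈ T ∧ l ∈ T ∧ (V k ∩ V l).Nonempty ∧ (∀ t, q t ∈ V k ∪ V l)
    · obtain ⟨q, hk, hl, hne, hq⟩ := h
      refine ⟨mk ((p k).trans (q.trans (p l).symm)), fun q' _ _ _ hq' => ?_⟩
      refine Path.Homotopic.Quotient.eq.2 ?_
      exact (Path.Homotopic.refl _).hcomp
        ((hgood k hk l hl hne k l q' q hq' hq).hcomp (Path.Homotopic.refl _))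
    · refine ⟨1, fun q hk hl hne hq => (h ⟨q, hk, hl, hne, hq⟩).elim⟩
  have hgen0 : ∀ k : M, ∃ g : FundamentalGroup M x, ∀ r : Path x k, k ∈ T → (∀ t, r t ∈ V k) →
      (mk (r.trans (p k).symm) : FundamentalGroup M x) = g := by
    intro k
    by_cases h : ∃ r : Path x k, k ∈ T ∧ (∀ t, r t ∈ V k)
    · obtain ⟨q, hk, hq⟩ := h
      refine ⟨mk (q.trans (p k).symm), fun q' _ hq' => ?_⟩
      refine Path.Homotopic.Quotient.eq.2 ?_
      have hg := (hgood k hk k hk ⟨k, (hV k).2.2, (hV k).2.2⟩).mono (S := V k) Set.subset_union_left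
      exact (hg x k q' q hq' hq).hcomp (Path.Homotopic.refl _)
    · refine ⟨1, fun q hk hq => (h ⟨q, hk, hq⟩).elim⟩
  choose g hg using hgen
  choose g0 hg0 using hgen0
  set S : Set (FundamentalGroup M x) :=
    (fun kl : M × M => g kl.1 kl.2) '' ((T ×ˢ T : Finset (M × M)) : Set (M × M)) ∪ g0 '' (T : Set M) with hS
  refine ⟨S, ((Finset.finite_toSet _).image _).union ((Finset.finite_toSet _).image _), fun γ hγ => ?_⟩
  set H := Subgroup.closure S with hH
  have hgH : ∀ k ∈ T, ∀ l ∈ T, g k l ∈ H := fun k hk l hl =>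
    Subgroup.subset_closure (Or.inl ⟨(k, l), by simp [hk, hl], rfl⟩)
  have hg0H : ∀ k ∈ T, g0 k ∈ H := fun k hk =>
    Subgroup.subset_closure (Or.inr ⟨k, by simpa using hk, rfl⟩)
  -- joining inside V
  have hjoin : ∀ k z, z ∈ V k → ∃ r : Path z k, ∀ t, r t ∈ V k := fun k z hz => by
    have := (hV k).2.1.joinedIn z hz k (hV k).2.2
    exact ⟨this.somePath, this.somePath_mem⟩
  have aux1 : ∀ k ∈ T, ∀ w (hw : w = x) (s : Path x w) (r : Path w k), (∀ t, r t ∈ V k) →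
      (mk (s.trans (r.trans (p k).symm)) : FundamentalGroup M x) ∈ H →
      (mk (s.cast rfl hw.symm) : FundamentalGroup M x) ∈ H := by
    intro k hk w hw s r hr hm
    subst hw
    have h2 : (mk (r.trans (p k).symm) : FundamentalGroup M w) ∈ H := by
      rw [hg0 k r hk hr]; exact hg0H k hk
    let A : FundamentalGroup M w := mk (r.trans (p k).symm)
    let B : FundamentalGroup M w := mk s
    have hm' : A * B ∈ H := hm
    exact (Subgroup.mul_mem_cancel_left H h2).1 hm'
  have aux0 : ∀ k ∈ T, ∀ w (hw : w = x) (s : Path x w), s.cast rfl hw.symm = Path.refl x →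
      ∀ (r : Path w k), (∀ t, r t ∈ V k) →
      (mk (s.trans (r.trans (p k).symm)) : FundamentalGroup M x) ∈ H := by
    intro k hk w hw s hs r hr
    subst hw
    have h2 : (mk (r.trans (p k).symm) : FundamentalGroup M w) ∈ H := by
      rw [hg0 k r hk hr]; exact hg0H k hk
    let A : FundamentalGroup M w := mk (r.trans (p k).symm)
    let B : FundamentalGroup M w := mk s
    have h4 : B = 1 := by
      have : s = Path.refl w := hs
      subst this; rfl
    have hm' : A * B ∈ H := by rw [h4, mul_one]; exact h2
    exact hm'
  set st : ∀ t : I, Path x (γ t) := fun t => (γ.subpath 0 t).cast γ.source.symm rfl with hst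
  have key : ∃ k ∈ T, ∃ r : Path (γ 1) k, (∀ s, r s ∈ V k) ∧
      (mk ((st 1).trans (r.trans (p k).symm)) : FundamentalGroup M x) ∈ H := by
    refine I_induction (fun t => ∃ k ∈ T, ∃ r : Path (γ t) k, (∀ s, r s ∈ V k) ∧
      (mk ((st t).trans (r.trans (p k).symm)) : FundamentalGroup M x) ∈ H) ?_ ?_
    · obtain ⟨k, hk, hxk⟩ := hcov (γ 0) (hγ 0)
      obtain ⟨r, hr⟩ := hjoin k _ hxk
      refine ⟨k, hk, r, hr, aux0 k hk _ γ.source _ ?_ r hr⟩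
      ext t; simp [hst, Path.subpath]
    · intro t₀
      obtain ⟨k, hk, hxk⟩ := hcov (γ t₀) (hγ t₀)
      refine ⟨γ ⁻¹' V k, ((hV k).1.preimage γ.continuous).mem_nhds hxk, ?_⟩
      rintro y z hyz hN ⟨l, hl, r, hr, hm⟩
      obtain ⟨r', hr'⟩ := hjoin k (γ z) (hN ⟨hyz, le_rfl⟩)
      refine ⟨k, hk, r', hr', ?_⟩
      have hq : ∀ t, (r.symm.trans ((γ.subpath y z).trans r')) t ∈ V l ∪ V k := by
        refine range_trans_mem (fun t => Or.inl (hr _)) (range_trans_mem ?_ fun t => Or.inr (hr' t))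
        exact subpath_mem γ hyz fun t ht => Or.inr (hN ht)
      have hne : (V l ∩ V k).Nonempty :=
        ⟨γ y, by have := hr 0; rwa [r.source] at this, hN ⟨le_rfl, hyz⟩⟩
      have h1 := hgH l hl k hk
      rw [← hg l k _ hl hk hne hq] at h1
      have h2 := H.mul_mem h1 hm
      have h3 : (mk ((st z).trans (r'.trans (p k).symm)) : Path.Homotopic.Quotient x x) =
          Path.Homotopic.Quotient.trans (mk ((st y).trans (r.trans (p l).symm)))
          (mk ((p l).trans ((r.symm.trans ((γ.subpath y z).trans r')).trans (p k).symm))) := by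
        have hs : (mk (st z) : Path.Homotopic.Quotient x (γ z)) =
            (mk (st y)).trans (mk (γ.subpath y z)) := by
          rw [← Path.Homotopic.Quotient.mk_trans]
          refine Path.Homotopic.Quotient.eq.2 ?_
          have h5 : ((γ.subpath 0 y).trans (γ.subpath y z)).Homotopic (γ.subpath 0 z) :=
            ⟨Path.Homotopy.subpathTransSubpath γ 0 y z⟩
          exact (h5.symm.pathCast γ.source.symm rfl)
        have hc1 : ∀ {a b c : M} (u : Path.Homotopic.Quotient a b) (v : Path.Homotopic.Quotient a c),
            u.trans (u.symm.trans v) = v := fun u v => by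
          rw [← Path.Homotopic.Quotient.trans_assoc, Path.Homotopic.Quotient.trans_symm,
            Path.Homotopic.Quotient.refl_trans]
        have hc2 : ∀ {a b c : M} (u : Path.Homotopic.Quotient b a) (v : Path.Homotopic.Quotient a c),
            u.symm.trans (u.trans v) = v := fun u v => by
          rw [← Path.Homotopic.Quotient.trans_assoc, Path.Homotopic.Quotient.symm_trans,
            Path.Homotopic.Quotient.refl_trans]
        simp only [Path.Homotopic.Quotient.mk_trans, Path.Homotopic.Quotient.mk_symm,
          Path.Homotopic.Quotient.trans_assoc, hs, hc1, hc2]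
      have h4 : (mk ((st z).trans (r'.trans (p k).symm)) : FundamentalGroup M x) = _ := h3
      rw [h4]
      exact h2
  obtain ⟨k, hk, r, hr, hm⟩ := key
  have h := aux1 k hk _ γ.target (st 1) r hr hm
  have : (st 1).cast rfl γ.target.symm = γ := by
    ext t; simp [hst]
  rwa [this] at h

end
end AnnPf

/-- Let `M` be an open surface with infinitely generated fundamental group and let
`{W n}` be a compact exhaustion of `M` such that each `W n` is connected, each
boundary curve of `W n` separates `M`, and `M − int (W n)` has no compact
components. Then for each `n` there exists `m > n` such that `W m − int (W n)` has
a connected component that is not an annulus. -/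
theorem eventually_nonannular_component
    (M : Type*) [TopologicalSpace M] [T2Space M] [SecondCountableTopology M]
    [ConnectedSpace M] (hnc : ¬ CompactSpace M)
    (hsurf : ∀ x : M, ∃ U : Set M, IsOpen U ∧ x ∈ U ∧ Nonempty (U ≃ₜ (ℝ × ℝ)))
    (hinf : ∀ x : M, ¬ Group.FG (FundamentalGroup M x))
    (W : ℕ → Set M)
    (hWc : ∀ n, IsCompact (W n)) (hWconn : ∀ n, IsConnected (W n))
    (hWmono : ∀ n, W n ⊆ interior (W (n + 1)))
    (hWcov : (⋃ n, W n) = Set.univ)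
    (hsep : ∀ n, ∀ x ∈ frontier (W n),
      ¬ IsPreconnected (Set.univ \ connectedComponentIn (frontier (W n)) x))
    (hnocpt : ∀ n, ∀ x ∈ (interior (W n))ᶜ,
      ¬ IsCompact (connectedComponentIn (interior (W n))ᶜ x)) :
    ∀ n, ∃ m > n, ∃ x ∈ W m \ interior (W n),
      ¬ Nonempty ((connectedComponentIn (W m \ interior (W n)) x : Set M) ≃ₜ
        annulusModel) := by
  intro n
  by_contra hcon
  have hann : ∀ m > n, ∀ x ∈ W m \ interior (W n),
      Nonempty ((connectedComponentIn (W m \ interior (W n)) x : Set M) ≃ₜ annulusModel) := by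
    intro m hm x hx
    by_contra h
    exact hcon ⟨m, hm, x, hx, h⟩
  have hmon : Monotone W := monotone_nat_of_le_succ fun n => (hWmono n).trans interior_subset
  have hchart : ∀ m > n, ∀ x ∈ W m \ interior (W n),
      ∃ Φ Ψ, AnnPf.AnnChart (connectedComponentIn (W m \ interior (W n)) x) Φ Ψ :=
    fun m hm x hx => AnnPf.exists_chart ⟨x, mem_connectedComponentIn hx⟩ (hann m hm x hx)
  obtain ⟨x, hx⟩ := (hWconn n).nonempty
  obtain ⟨S, hSf, hS⟩ := AnnPf.fg_loops hsurf (hWc (n + 1)) x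
  have htop : Subgroup.closure S = ⊤ := by
    rw [eq_top_iff]
    intro g _
    obtain ⟨γ, rfl⟩ := Path.Homotopic.Quotient.mk_surjective (x₀ := x) (x₁ := x) g
    obtain ⟨m, hm⟩ : ∃ m, Set.range γ ⊆ interior (W (m + 1)) := by
      refine (isCompact_range γ.continuous).elim_directed_cover (fun k => interior (W (k + 1)))
        (fun _ => isOpen_interior) ?_ ?_
      · intro y _
        have : y ∈ ⋃ n, W n := by rw [hWcov]; trivial
        obtain ⟨k, hk⟩ := Set.mem_iUnion.1 this
        exact Set.mem_iUnion.2 ⟨k, hWmono k hk⟩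
      · exact Monotone.directed_le fun a b hab => interior_mono (hmon (by omega))
    have hLL : W (n + 1) ⊆ W (n + m + 1) := hmon (by omega)
    have hxL : x ∈ W (n + 1) := hmon (Nat.le_succ n) hx
    obtain ⟨β, hβ, hh⟩ := AnnPf.push_into (L := W (n + 1)) (L' := W (n + m + 1))
      (U := interior (W n)) (K := W n) (hWc n).isClosed interior_subset (hWmono n)
      (fun ha hb τ hτ => AnnPf.excursion hsurf hLL (hnocpt (n + 1)) (hchart _ (by omega))
        (hchart _ (by omega)) ha hb τ hτ) hxL hxL γ
      (fun t => hmon (by omega : m + 1 ≤ n + m + 1) (interior_subset (hm ⟨t, rfl⟩)))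
    rw [Path.Homotopic.Quotient.eq.2 hh]
    exact hS β hβ
  exact hinf x (Group.fg_iff.2 ⟨S, htop, hSf⟩)
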